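/- arXiv:2408.15352 — 4 statements merged into one kernel-verified Lean document; each statement's English description precedes it below -/
import Mathlib

section
/- For every n ≥ 3 and 2 ≤ k ≤ n−1: Q(F_n^k)_M = Q(F_n^{k−1}) and Q(F_n^k)_O = Q(F_n^{k+1}), i.e., Q(F_n^k) − D_M^{Q(F_n^k)} = Q(F_n^{k−1}) and Q(F_n^k) + D_O^{Q(F_n^k)} = Q(F_n^{k+1}) as functions on L_n × L_n. -/
open Finset

/-- An `n×n` matrix encoded as `ℕ → ℕ → ℝ` with indices `1,…,n` and zero entries outside. -/
def IsASM (n : ℕ) (a : ℕ → ℕ → ℝ) : Prop :=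
  (∀ i j, ¬(1 ≤ i ∧ i ≤ n ∧ 1 ≤ j ∧ j ≤ n) → a i j = 0) ∧
  (∀ i j, a i j = -1 ∨ a i j = 0 ∨ a i j = 1) ∧
  (∀ i, 1 ≤ i → i ≤ n → ∑ j ∈ Icc 1 n, a i j = 1) ∧
  (∀ j, 1 ≤ j → j ≤ n → ∑ i ∈ Icc 1 n, a i j = 1) ∧
  (∀ i t, 1 ≤ i → i ≤ n → t ≤ n →
    (∑ j ∈ Icc 1 t, a i j = 0 ∨ ∑ j ∈ Icc 1 t, a i j = 1)) ∧
  (∀ j t, 1 ≤ j → j ≤ n → t ≤ n →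
    (∑ i ∈ Icc 1 t, a i j = 0 ∨ ∑ i ∈ Icc 1 t, a i j = 1))

/-- No zero entry lies between two nonzero entries in any row or column. -/
def IsDense (a : ℕ → ℕ → ℝ) : Prop :=
  (∀ i j₁ j₂ j₃, j₁ < j₂ → j₂ < j₃ → a i j₁ ≠ 0 → a i j₃ ≠ 0 → a i j₂ ≠ 0) ∧
  (∀ j i₁ i₂ i₃, i₁ < i₂ → i₂ < i₃ → a i₁ j ≠ 0 → a i₃ j ≠ 0 → a i₂ j ≠ 0)

/-- A proper ASM contains at least one entry `-1`. -/
def IsProper (a : ℕ → ℕ → ℝ) : Prop := ∃ i j, a i j = -1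

/-- The matrix `F_n^k`. -/
noncomputable def Fmat (n k : ℕ) : ℕ → ℕ → ℝ := fun i j =>
  if k + 1 ≤ i + j ∧ (i : ℤ) + j ≤ 2 * n - k + 1 ∧ |(i : ℤ) - j| ≤ (k : ℤ) - 1
  then (-1 : ℝ) ^ (i + j - k - 1) else 0

/-- The discrete quasi-copula associated with a matrix: `Q(A)(r,s) = Σ_{i≤r} Σ_{j≤s} a_{ij}`. -/
noncomputable def Qmat (a : ℕ → ℕ → ℝ) : ℕ → ℕ → ℝ := fun r s =>
  ∑ i ∈ Icc 1 r, ∑ j ∈ Icc 1 s, a i j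

/-- Volume of the rectangle `[i,j]×[k,l]` with respect to `Q`. -/
def vol (Q : ℕ → ℕ → ℝ) (i j k l : ℕ) : ℝ := Q i k + Q j l - Q i l - Q j k

/-- `D_↘^Q(r,s) = min{0, V_Q([r,r']×[s,s']) : r < r' ≤ n, s < s' ≤ n}`. -/
noncomputable def Dse (n : ℕ) (Q : ℕ → ℕ → ℝ) (r s : ℕ) : ℝ :=
  (Icc (r+1) n ×ˢ Icc (s+1) n).fold min 0 (fun p => vol Q r p.1 s p.2)

/-- `D_↙^Q(r,s) = min{0, V_Q([r,r']×[s',s]) : r < r' ≤ n, 0 ≤ s' < s}`. -/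
noncomputable def Dsw (n : ℕ) (Q : ℕ → ℕ → ℝ) (r s : ℕ) : ℝ :=
  (Icc (r+1) n ×ˢ range s).fold min 0 (fun p => vol Q r p.1 p.2 s)

/-- `D_↖^Q(r,s) = min{0, V_Q([r',r]×[s',s]) : 0 ≤ r' < r, 0 ≤ s' < s}`. -/
noncomputable def Dnw (n : ℕ) (Q : ℕ → ℕ → ℝ) (r s : ℕ) : ℝ :=
  (range r ×ˢ range s).fold min 0 (fun p => vol Q p.1 r p.2 s)

/-- `D_↗^Q(r,s) = min{0, V_Q([r',r]×[s,s']) : 0 ≤ r' < r, s < s' ≤ n}`. -/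
noncomputable def Dne (n : ℕ) (Q : ℕ → ℕ → ℝ) (r s : ℕ) : ℝ :=
  (range r ×ˢ Icc (s+1) n).fold min 0 (fun p => vol Q p.1 r s p.2)

/-- The main defect `D_M^Q`. -/
noncomputable def DM (n : ℕ) (Q : ℕ → ℕ → ℝ) (r s : ℕ) : ℝ :=
  min (Dse n Q r s) (Dnw n Q r s)

/-- The opposite defect `D_O^Q`. -/
noncomputable def DO (n : ℕ) (Q : ℕ → ℕ → ℝ) (r s : ℕ) : ℝ :=
  min (Dsw n Q r s) (Dne n Q r s)

/-- Boundary conditions for a function on `L_n × L_n`. -/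
def DiscBoundary (n : ℕ) (P : ℕ → ℕ → ℝ) : Prop :=
  ∀ i, i ≤ n → P i 0 = 0 ∧ P 0 i = 0 ∧ P i n = i ∧ P n i = i

/-- `(P,Q)` is a discrete imprecise copula on `L_n × L_n`. -/
def DiscImpreciseCopula (n : ℕ) (P Q : ℕ → ℕ → ℝ) : Prop :=
  DiscBoundary n P ∧ DiscBoundary n Q ∧
  ∀ i j k l, i ≤ j → j ≤ n → k ≤ l → l ≤ n →
    0 ≤ Q i k + P j l - P i l - P j k ∧
    0 ≤ P i k + Q j l - P i l - P j k ∧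
    0 ≤ Q i k + Q j l - Q i l - P j k ∧
    0 ≤ Q i k + Q j l - P i l - Q j k

/-- `(P,Q)` is a self-dual discrete imprecise copula: `P_M = Q` and `Q_O = P` on `L_n × L_n`. -/
def SelfDual (n : ℕ) (P Q : ℕ → ℕ → ℝ) : Prop :=
  DiscImpreciseCopula n P Q ∧
  (∀ r, r ≤ n → ∀ s, s ≤ n → P r s - DM n P r s = Q r s) ∧
  (∀ r, r ≤ n → ∀ s, s ≤ n → Q r s + DO n Q r s = P r s)

/-- A discrete quasi-copula (integer-range normalization) on `L_n × L_n`. -/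
def DiscQuasiCopula (n : ℕ) (Q : ℕ → ℕ → ℝ) : Prop :=
  DiscBoundary n Q ∧
  (∀ i i' j, i ≤ i' → i' ≤ n → j ≤ n → Q i j ≤ Q i' j) ∧
  (∀ i j j', j ≤ j' → j' ≤ n → i ≤ n → Q i j ≤ Q i j') ∧
  (∀ i i' j j', i ≤ n → i' ≤ n → j ≤ n → j' ≤ n →
    |Q i j - Q i' j'| ≤ |(i : ℝ) - i'| + |(j : ℝ) - j'|)

/-- A discrete copula: a discrete quasi-copula with all rectangle volumes nonnegative. -/
def DiscCopula (n : ℕ) (Q : ℕ → ℕ → ℝ) : Prop :=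
  DiscQuasiCopula n Q ∧
  ∀ i j k l, i ≤ j → j ≤ n → k ≤ l → l ≤ n → 0 ≤ vol Q i j k l

/-- A permutation matrix encoded as `ℕ → ℕ → ℝ` with indices `1,…,n`. -/
def IsPermMatrix (n : ℕ) (p : ℕ → ℕ → ℝ) : Prop :=
  (∀ i j, ¬(1 ≤ i ∧ i ≤ n ∧ 1 ≤ j ∧ j ≤ n) → p i j = 0) ∧
  (∀ i j, p i j = 0 ∨ p i j = 1) ∧
  (∀ i, 1 ≤ i → i ≤ n → ∑ j ∈ Icc 1 n, p i j = 1) ∧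
  (∀ j, 1 ≤ j → j ≤ n → ∑ i ∈ Icc 1 n, p i j = 1)

/-- Closed form of `Q(F_n^k)`. -/
def gq (n k r s : ℤ) : ℤ := max (max 0 (r + s - n)) (min (min r s) ((r + s - k + 1) / 2))

theorem gq_mono_left (n k r r' s : ℤ) (h : r ≤ r') : gq n k r s ≤ gq n k r' s := by
  unfold gq; omega

theorem gq_mono_right (n k r s s' : ℤ) (h : s ≤ s') : gq n k r s ≤ gq n k r s' := by
  unfold gq; omega

theorem gq_lip_left (n k r r' s : ℤ) (h : r ≤ r') : gq n k r' s ≤ gq n k r s + (r' - r) := by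
  unfold gq; omega

theorem gq_lip_right (n k r s s' : ℤ) (h : s ≤ s') : gq n k r s' ≤ gq n k r s + (s' - s) := by
  unfold gq; omega

theorem gq_anti (n k r s : ℤ) : gq n (k + 1) r s ≤ gq n k r s := by
  unfold gq; omega

/-- Lower bounds. -/
theorem gq_lower (n k r s : ℤ) : 0 ≤ gq n k r s ∧ r + s - n ≤ gq n k r s ∧
    (r ≤ gq n k r s ∨ s ≤ gq n k r s ∨ (r + s - k + 1) / 2 ≤ gq n k r s) := by
  unfold gq; omega

/-- Upper bounds. -/
theorem gq_upper (n k r s : ℤ) (hr : 0 ≤ r) (hs : 0 ≤ s) (hrn : r ≤ n) (hsn : s ≤ n) :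
    gq n k r s ≤ r ∧ gq n k r s ≤ s ∧
    (gq n k r s ≤ 0 ∨ gq n k r s ≤ r + s - n ∨ gq n k r s ≤ (r + s - k + 1) / 2) := by
  unfold gq; omega

theorem gq_se (n k r r' s s' : ℤ) (hr : 0 ≤ r) (hs : 0 ≤ s) (hrr : r ≤ r') (hss : s ≤ s')
    (hr' : r' ≤ n) (hs' : s' ≤ n) :
    gq n k r s' + gq n k r' s ≤ gq n (k - 1) r s + gq n k r' s' := by
  have a1 := gq_mono_left n k r r' s hrr
  have a2 := gq_mono_left n k r r' s' hrr
  have a3 := gq_mono_right n k r s s' hss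
  have a4 := gq_mono_right n k r' s s' hss
  have b1 := gq_lip_left n k r r' s hrr
  have b2 := gq_lip_left n k r r' s' hrr
  have b3 := gq_lip_right n k r s s' hss
  have b4 := gq_lip_right n k r' s s' hss
  have c := gq_anti n (k - 1) r s
  rw [sub_add_cancel] at c
  obtain ⟨l0, -, l1⟩ := gq_lower n (k - 1) r s
  obtain ⟨-, l2, l3⟩ := gq_lower n k r' s'
  obtain ⟨u1, u2, u3⟩ := gq_upper n k r s' hr (by omega) (by omega) hs'
  obtain ⟨v1, v2, v3⟩ := gq_upper n k r' s (by omega) hs hr' (by omega)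
  rcases u3 with u3 | u3 | u3 <;> rcases v3 with v3 | v3 | v3 <;>
    rcases l1 with l1 | l1 | l1 <;> rcases l3 with l3 | l3 | l3 <;> omega

theorem gq_nw (n k r r' s s' : ℤ) (hr : 0 ≤ r) (hs : 0 ≤ s) (hrr : r ≤ r') (hss : s ≤ s')
    (hr' : r' ≤ n) (hs' : s' ≤ n) :
    gq n k r s' + gq n k r' s ≤ gq n k r s + gq n (k - 1) r' s' := by
  have a1 := gq_mono_left n k r r' s hrr
  have a2 := gq_mono_left n k r r' s' hrr
  have a3 := gq_mono_right n k r s s' hss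
  have a4 := gq_mono_right n k r' s s' hss
  have b1 := gq_lip_left n k r r' s hrr
  have b2 := gq_lip_left n k r r' s' hrr
  have b3 := gq_lip_right n k r s s' hss
  have b4 := gq_lip_right n k r' s s' hss
  have c := gq_anti n (k - 1) r' s'
  rw [sub_add_cancel] at c
  obtain ⟨l0, -, l1⟩ := gq_lower n k r s
  obtain ⟨-, l2, l3⟩ := gq_lower n (k - 1) r' s'
  obtain ⟨u1, u2, u3⟩ := gq_upper n k r s' hr (by omega) (by omega) hs'
  obtain ⟨v1, v2, v3⟩ := gq_upper n k r' s (by omega) hs hr' (by omega)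
  rcases u3 with u3 | u3 | u3 <;> rcases v3 with v3 | v3 | v3 <;>
    rcases l1 with l1 | l1 | l1 <;> rcases l3 with l3 | l3 | l3 <;> omega

theorem gq_symm (n k r s : ℤ) : gq n k r s = gq n k s r := by
  unfold gq; omega

/-- Reflection in the second variable. -/
theorem gq_refl (n k r s : ℤ) (hr : 0 ≤ r) (hs : 0 ≤ s) (hrn : r ≤ n) (hsn : s ≤ n) :
    gq n k r s = r - gq n (n + 1 - k) r (n - s) := by
  unfold gq; omega

/-- `[r,r'] × [s',s]` seen from `(r,s)`. -/
theorem gq_sw (n k r r' s s' : ℤ) (hr : 0 ≤ r) (hs : 0 ≤ s') (hrr : r ≤ r') (hss : s' ≤ s)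
    (hr' : r' ≤ n) (hs' : s ≤ n) :
    gq n (k + 1) r s + gq n k r' s' ≤ gq n k r s' + gq n k r' s := by
  have h := gq_se n (n + 1 - k) r r' (n - s) (n - s') hr (by omega) hrr (by omega) hr' (by omega)
  rw [gq_refl n (k + 1) r s, gq_refl n k r' s', gq_refl n k r s', gq_refl n k r' s]
  · rw [show n + 1 - (k + 1) = n + 1 - k - 1 by ring]
    omega
  all_goals omega

/-- `[r',r] × [s,s']` seen from `(r,s)`. -/
theorem gq_ne (n k r r' s s' : ℤ) (hr : 0 ≤ r') (hs : 0 ≤ s) (hrr : r' ≤ r) (hss : s ≤ s')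
    (hr' : r ≤ n) (hs' : s' ≤ n) :
    gq n (k + 1) r s + gq n k r' s' ≤ gq n k r' s + gq n k r s' := by
  have h := gq_sw n k s s' r r' hs hr hss hrr hs' hr'
  rw [gq_symm n (k + 1) r s, gq_symm n k r' s', gq_symm n k r' s, gq_symm n k r s']
  omega

/-- Where the main difference is nonzero, one adjacent cell witnesses it. -/
theorem gq_M_wit (n k r s : ℤ) (hk : 1 ≤ k) (hkn : k + 1 ≤ n) (hr : 0 ≤ r) (hs : 0 ≤ s)
    (hrn : r ≤ n) (hsn : s ≤ n) :
    gq n k r s = gq n (k - 1) r s ∨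
    (r + 1 ≤ n ∧ s + 1 ≤ n ∧ gq n k r s + gq n k (r + 1) (s + 1) - gq n k r (s + 1)
      - gq n k (r + 1) s = gq n k r s - gq n (k - 1) r s) ∨
    (1 ≤ r ∧ 1 ≤ s ∧ gq n k (r - 1) (s - 1) + gq n k r s - gq n k (r - 1) s
      - gq n k r (s - 1) = gq n k r s - gq n (k - 1) r s) := by
  by_cases h : (r + s - k) % 2 = 0 ∧ k ≤ r + s ∧ r + s ≤ 2 * n - k ∧ r - s ≤ k - 2 ∧ s - r ≤ k - 2
  · right
    obtain ⟨h1, h2, h3, h4, h5⟩ := h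
    obtain ⟨t, ht⟩ : ∃ t, r + s = k + 2 * t := ⟨(r + s - k) / 2, by omega⟩
    have e0 : gq n k r s = t := by unfold gq; omega
    have e1 : gq n (k - 1) r s = t + 1 := by unfold gq; omega
    by_cases h6 : r + s = 2 * n - k
    · right
      have e2 : gq n k (r - 1) (s - 1) = t - 1 := by unfold gq; omega
      have e3 : gq n k (r - 1) s = t := by unfold gq; omega
      have e4 : gq n k r (s - 1) = t := by unfold gq; omega
      omega
    · left
      have e2 : gq n k (r + 1) (s + 1) = t + 1 := by unfold gq; omega
      have e3 : gq n k (r + 1) s = t + 1 := by unfold gq; omega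
      have e4 : gq n k r (s + 1) = t + 1 := by unfold gq; omega
      omega
  · left
    unfold gq; omega

theorem gq_O_wit (n k r s : ℤ) (hk : 2 ≤ k) (hkn : k + 1 ≤ n) (hr : 0 ≤ r) (hs : 0 ≤ s)
    (hrn : r ≤ n) (hsn : s ≤ n) :
    gq n k r s = gq n (k + 1) r s ∨
    (r + 1 ≤ n ∧ 1 ≤ s ∧ gq n k r (s - 1) + gq n k (r + 1) s - gq n k r s
      - gq n k (r + 1) (s - 1) = gq n (k + 1) r s - gq n k r s) ∨
    (1 ≤ r ∧ s + 1 ≤ n ∧ gq n k (r - 1) s + gq n k r (s + 1) - gq n k (r - 1) (s + 1)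
      - gq n k r s = gq n (k + 1) r s - gq n k r s) := by
  rcases gq_M_wit n (n + 1 - k) r (n - s) (by omega) (by omega) hr (by omega) hrn (by omega)
    with h | ⟨h1, h2, h3⟩ | ⟨h1, h2, h3⟩
  · left
    rw [gq_refl n k r s, gq_refl n (k + 1) r s, show n + 1 - (k + 1) = n + 1 - k - 1 by ring]
    all_goals omega
  · right; left
    refine ⟨h1, by omega, ?_⟩
    rw [gq_refl n k r s, gq_refl n (k + 1) r s, gq_refl n k r (s - 1), gq_refl n k (r + 1) s,
      gq_refl n k (r + 1) (s - 1), show n + 1 - (k + 1) = n + 1 - k - 1 by ring,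
      show n - (s - 1) = n - s + 1 by ring]
    all_goals omega
  · right; right
    refine ⟨h1, by omega, ?_⟩
    rw [gq_refl n k r s, gq_refl n (k + 1) r s, gq_refl n k (r - 1) s, gq_refl n k r (s + 1),
      gq_refl n k (r - 1) (s + 1), show n + 1 - (k + 1) = n + 1 - k - 1 by ring,
      show n - (s + 1) = n - s - 1 by ring]
    all_goals omega

/-- The mixed difference of the closed form is the matrix entry. -/
theorem gq_entry (n k i j : ℕ) (hk : 1 ≤ k) (hkn : k ≤ n) (hi : i + 1 ≤ n) (hj : j + 1 ≤ n) :
    Fmat n k (i + 1) (j + 1) =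
      ((gq n k (i + 1) (j + 1) - gq n k i (j + 1) - gq n k (i + 1) j + gq n k i j : ℤ) : ℝ) := by
  unfold Fmat
  split_ifs with h
  · obtain ⟨h1, h2, h3⟩ := h
    rw [abs_le] at h3
    push_cast at h2 h3
    obtain ⟨h3, h4⟩ := h3
    rcases Nat.even_or_odd (i + 1 + (j + 1) - k - 1) with he | he
    · rw [he.neg_one_pow]
      obtain ⟨t, ht⟩ := he
      have e0 : gq n k (i + 1) (j + 1) = t + 1 := by unfold gq; omega
      have e1 : gq n k i (j + 1) = t := by unfold gq; omega
      have e2 : gq n k (i + 1) j = t := by unfold gq; omega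
      have e3 : gq n k i j = t := by unfold gq; omega
      rw [e0, e1, e2, e3]; push_cast; ring
    · rw [he.neg_one_pow]
      obtain ⟨t, ht⟩ := he
      have e0 : gq n k (i + 1) (j + 1) = t + 1 := by unfold gq; omega
      have e1 : gq n k i (j + 1) = t + 1 := by unfold gq; omega
      have e2 : gq n k (i + 1) j = t + 1 := by unfold gq; omega
      have e3 : gq n k i j = t := by unfold gq; omega
      rw [e0, e1, e2, e3]; push_cast; ring
  · rw [abs_le] at h
    push_cast at h
    have : (gq n k (i + 1) (j + 1) - gq n k i (j + 1) - gq n k (i + 1) j + gq n k i j : ℤ) = 0 := by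
      have h' : i + j + 2 ≤ k ∨ 2 * n - k ≤ (i : ℤ) + j ∨ (k : ℤ) ≤ i - j ∨ (k : ℤ) ≤ j - i := by
        omega
      rcases h' with h' | h' | h' | h'
      · have e0 : gq n k (i + 1) (j + 1) = 0 := by unfold gq; omega
        have e1 : gq n k i (j + 1) = 0 := by unfold gq; omega
        have e2 : gq n k (i + 1) j = 0 := by unfold gq; omega
        have e3 : gq n k i j = 0 := by unfold gq; omega
        omega
      · have e0 : gq n k (i + 1) (j + 1) = i + j + 2 - n := by unfold gq; omega
        have e1 : gq n k i (j + 1) = i + j + 1 - n := by unfold gq; omega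
        have e2 : gq n k (i + 1) j = i + j + 1 - n := by unfold gq; omega
        have e3 : gq n k i j = i + j - n := by unfold gq; omega
        omega
      · have e0 : gq n k (i + 1) (j + 1) = j + 1 := by unfold gq; omega
        have e1 : gq n k i (j + 1) = j + 1 := by unfold gq; omega
        have e2 : gq n k (i + 1) j = j := by unfold gq; omega
        have e3 : gq n k i j = j := by unfold gq; omega
        omega
      · have e0 : gq n k (i + 1) (j + 1) = i + 1 := by unfold gq; omega
        have e1 : gq n k i (j + 1) = i := by unfold gq; omega
        have e2 : gq n k (i + 1) j = i + 1 := by unfold gq; omega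
        have e3 : gq n k i j = i := by unfold gq; omega
        omega
    rw [this]; simp

theorem Fmat_row (n k i s : ℕ) (hk : 1 ≤ k) (hkn : k ≤ n) (hi : i + 1 ≤ n) (hs : s ≤ n) :
    ∑ j ∈ Icc 1 s, Fmat n k (i + 1) j = ((gq n k (i + 1) s - gq n k i s : ℤ) : ℝ) := by
  induction s with
  | zero =>
    have e1 : gq n k (i + 1) (0 : ℕ) = 0 := by unfold gq; omega
    have e2 : gq n k i (0 : ℕ) = 0 := by unfold gq; omega
    rw [e1, e2]; simp
  | succ s ih =>
    rw [Finset.sum_Icc_succ_top (by omega), ih (by omega), gq_entry n k i s hk hkn hi hs]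
    push_cast; ring

theorem Qmat_eq (n k r s : ℕ) (hk : 1 ≤ k) (hkn : k ≤ n) (hr : r ≤ n) (hs : s ≤ n) :
    Qmat (Fmat n k) r s = ((gq n k r s : ℤ) : ℝ) := by
  unfold Qmat
  induction r with
  | zero =>
    have e1 : gq n k (0 : ℕ) s = 0 := by unfold gq; omega
    rw [e1]; simp
  | succ r ih =>
    rw [Finset.sum_Icc_succ_top (by omega), ih (by omega), Fmat_row n k r s hk hkn hr hs]
    push_cast; ring

/-- For every `n ≥ 3` and `2 ≤ k ≤ n−1`,
`Q(F_n^k)_M = Q(F_n^{k−1})` and `Q(F_n^k)_O = Q(F_n^{k+1})` on `L_n × L_n`. -/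
theorem QFk_M_and_O (n k : ℕ) (hn : 3 ≤ n) (hk1 : 2 ≤ k) (hk2 : k ≤ n - 1) :
    ∀ r s, r ≤ n → s ≤ n →
      Qmat (Fmat n k) r s - DM n (Qmat (Fmat n k)) r s = Qmat (Fmat n (k - 1)) r s ∧
      Qmat (Fmat n k) r s + DO n (Qmat (Fmat n k)) r s = Qmat (Fmat n (k + 1)) r s := by
  intro r s hr hs
  have hQ : ∀ a b : ℕ, a ≤ n → b ≤ n → Qmat (Fmat n k) a b = ((gq n k a b : ℤ) : ℝ) :=
    fun a b ha hb => Qmat_eq n k a b (by omega) (by omega) ha hb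
  have hQ1 : Qmat (Fmat n (k - 1)) r s = ((gq n (k - 1) r s : ℤ) : ℝ) := by
    have h := Qmat_eq n (k - 1) r s (by omega) (by omega) hr hs
    rwa [Nat.cast_sub (by omega), Nat.cast_one] at h
  have hQ2 : Qmat (Fmat n (k + 1)) r s = ((gq n (k + 1) r s : ℤ) : ℝ) := by
    have h := Qmat_eq n (k + 1) r s (by omega) (by omega) hr hs
    rwa [Nat.cast_add, Nat.cast_one] at h
  have hv : ∀ a b c d : ℕ, a ≤ n → b ≤ n → c ≤ n → d ≤ n → vol (Qmat (Fmat n k)) a b c d =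
      ((gq n k a c + gq n k b d - gq n k a d - gq n k b c : ℤ) : ℝ) := by
    intro a b c d ha hb hc hd
    unfold vol
    rw [hQ a c ha hc, hQ b d hb hd, hQ a d ha hd, hQ b c hb hc]
    push_cast; ring
  have hM : DM n (Qmat (Fmat n k)) r s = ((gq n k r s - gq n (k - 1) r s : ℤ) : ℝ) := by
    have hc := gq_anti n (k - 1) r s
    rw [sub_add_cancel] at hc
    apply le_antisymm
    · unfold DM Dse Dnw
      rw [min_le_iff, Finset.fold_min_le, Finset.fold_min_le]
      rcases gq_M_wit n k r s (by omega) (by omega) (by omega) (by omega) (by omega) (by omega)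
        with h | ⟨h1, h2, h3⟩ | ⟨h1, h2, h3⟩
      · left; left
        rw [h]; simp
      · left; right
        refine ⟨(r + 1, s + 1), ?_, ?_⟩
        · simp only [Finset.mem_product, Finset.mem_Icc]; omega
        · rw [hv r (r + 1) s (s + 1) hr (by omega) hs (by omega), Int.cast_le]
          push_cast; exact h3.le
      · right; right
        obtain ⟨a, rfl⟩ : ∃ a, r = a + 1 := ⟨r - 1, by omega⟩
        obtain ⟨b, rfl⟩ : ∃ b, s = b + 1 := ⟨s - 1, by omega⟩
        refine ⟨(a, b), ?_, ?_⟩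
        · simp only [Finset.mem_product, Finset.mem_range]; omega
        · rw [hv a (a + 1) b (b + 1) (by omega) hr (by omega) hs, Int.cast_le]
          push_cast at h3 ⊢
          simp only [add_sub_cancel_right] at h3
          exact h3.le
    · unfold DM Dse Dnw
      rw [le_min_iff, Finset.le_fold_min, Finset.le_fold_min]
      have h0 : ((gq n k r s - gq n (k - 1) r s : ℤ) : ℝ) ≤ 0 := by
        rw [← Int.cast_zero, Int.cast_le]; omega
      refine ⟨⟨h0, ?_⟩, ⟨h0, ?_⟩⟩
      · rintro ⟨a, b⟩ hab
        simp only [Finset.mem_product, Finset.mem_Icc] at hab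
        rw [hv r a s b hr (by omega) hs (by omega), Int.cast_le]
        have := gq_se n k r a s b (by omega) (by omega) (by omega) (by omega) (by omega) (by omega)
        omega
      · rintro ⟨a, b⟩ hab
        simp only [Finset.mem_product, Finset.mem_range] at hab
        rw [hv a r b s (by omega) hr (by omega) hs, Int.cast_le]
        have := gq_nw n k a r b s (by omega) (by omega) (by omega) (by omega) (by omega) (by omega)
        omega
  have hO : DO n (Qmat (Fmat n k)) r s = ((gq n (k + 1) r s - gq n k r s : ℤ) : ℝ) := by
    have hc := gq_anti n k r s
    apply le_antisymm
    · unfold DO Dsw Dne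
      rw [min_le_iff, Finset.fold_min_le, Finset.fold_min_le]
      rcases gq_O_wit n k r s (by omega) (by omega) (by omega) (by omega) (by omega) (by omega)
        with h | ⟨h1, h2, h3⟩ | ⟨h1, h2, h3⟩
      · left; left
        rw [h]; simp
      · left; right
        obtain ⟨b, rfl⟩ : ∃ b, s = b + 1 := ⟨s - 1, by omega⟩
        refine ⟨(r + 1, b), ?_, ?_⟩
        · simp only [Finset.mem_product, Finset.mem_Icc, Finset.mem_range]; omega
        · rw [hv r (r + 1) b (b + 1) hr (by omega) (by omega) hs, Int.cast_le]
          push_cast at h3 ⊢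
          simp only [add_sub_cancel_right] at h3
          exact h3.le
      · right; right
        obtain ⟨a, rfl⟩ : ∃ a, r = a + 1 := ⟨r - 1, by omega⟩
        refine ⟨(a, s + 1), ?_, ?_⟩
        · simp only [Finset.mem_product, Finset.mem_Icc, Finset.mem_range]; omega
        · rw [hv a (a + 1) s (s + 1) (by omega) hr hs (by omega), Int.cast_le]
          push_cast at h3 ⊢
          simp only [add_sub_cancel_right] at h3
          exact h3.le
    · unfold DO Dsw Dne
      rw [le_min_iff, Finset.le_fold_min, Finset.le_fold_min]
      have h0 : ((gq n (k + 1) r s - gq n k r s : ℤ) : ℝ) ≤ 0 := by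
        rw [← Int.cast_zero, Int.cast_le]; omega
      refine ⟨⟨h0, ?_⟩, ⟨h0, ?_⟩⟩
      · rintro ⟨a, b⟩ hab
        simp only [Finset.mem_product, Finset.mem_Icc, Finset.mem_range] at hab
        rw [hv r a b s hr (by omega) (by omega) hs, Int.cast_le]
        have := gq_sw n k r a s b (by omega) (by omega) (by omega) (by omega) (by omega) (by omega)
        omega
      · rintro ⟨a, b⟩ hab
        simp only [Finset.mem_product, Finset.mem_Icc, Finset.mem_range] at hab
        rw [hv a r s b (by omega) hr hs (by omega), Int.cast_le]
        have := gq_ne n k r a s b (by omega) (by omega) (by omega) (by omega) (by omega) (by omega)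
        omega
  rw [hM, hO, hQ r s hr hs, hQ1, hQ2]
  constructor
  · push_cast; ring
  · push_cast; ring
end

section
/- For every n ≥ 4 and 3 ≤ k ≤ n−1, there exist two discrete copulas C₁ and C₂ (each corresponding to an n×n permutation matrix) such that for all (r,s) ∈ L_n × L_n, Q(F_n^k)(r,s) = min{C₁(r,s), C₂(r,s)} and Q(F_n^{k−1})(r,s) = max{C₁(r,s), C₂(r,s)}. Consequently, the imprecise copula (Q(F_n^k), Q(F_n^{k−1})) is coherent: for every (r,s) ∈ L_n × L_n, Q(F_n^k)(r,s) is the infimum and Q(F_n^{k−1})(r,s) the supremum of C(r,s) over all discrete copulas C with Q(F_n^k) ≤ C ≤ Q(F_n^{k−1}) pointwise. -/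
open Finset

/-- Closed form of `Q(F_n^k)`. -/
def GQ (n k r s : ℤ) : ℤ := max (max 0 (r + s - n)) (min (min r s) ((r + s - k + 1) / 2))

/-- Row partial sums of `F_n^k`. -/
def RQ (n k i j : ℤ) : ℤ :=
  if 2 * n - k + 1 - i ≤ j ∨ i + k - 1 ≤ j then 1
  else if j < k + 1 - i ∨ j < i - k + 1 then 0
  else (i + j - k) % 2

/-- Closed forms of the two copulas. -/
def CQ (n k e r s : ℤ) : ℤ :=
  if (r + s - k) % 2 = 0 ∧ (r - e) % 2 = 0 then GQ n (k - 1) r s else GQ n k r s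

/-- The two permutation matrices, integer version. -/
def PZ (n k e i j : ℤ) : ℤ :=
  if 1 ≤ i ∧ i ≤ n ∧ 1 ≤ j ∧ j ≤ n ∧
    (((i - e) % 2 = 0 ∧ (i + j = k ∨ i - j = k - 1)) ∨
     ((i - e) % 2 = 1 ∧ (j - i = k - 1 ∨ i + j = 2 * n - k + 2))) then 1 else 0

/-- Row partial sums of the permutation matrices. -/
def SZ (n k e i j : ℤ) : ℤ :=
  if (i - e) % 2 = 0 then (if k - i ≤ j ∧ i - k + 1 ≤ j then 1 else 0)
  else (if i + k - 1 ≤ j ∨ 2 * n - k + 2 - i ≤ j then 1 else 0)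

lemma GQ_step (n k i j : ℤ) (hk : 1 ≤ k) (hkn : k ≤ n) (hi : 0 ≤ i) (hin : i < n) (hj : 0 ≤ j)
    (hjn : j ≤ n) : GQ n k (i + 1) j - GQ n k i j = RQ n k (i + 1) j := by
  unfold GQ RQ
  split_ifs <;> omega

/-- Difference of the consecutive closed forms. -/
def DQ (n k r s : ℤ) : ℤ :=
  if (r + s - k) % 2 = 0 ∧ k ≤ r + s ∧ r + s ≤ 2 * n - k ∧ r - s ≤ k - 2 ∧ s - r ≤ k - 2
  then 1 else 0

lemma GQ_diff (n k r s : ℤ) (hk : 2 ≤ k) (hkn : k ≤ n) (hr : 0 ≤ r) (hrn : r ≤ n) (hs : 0 ≤ s)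
    (hsn : s ≤ n) : GQ n (k - 1) r s = GQ n k r s + DQ n k r s := by
  unfold GQ DQ
  split_ifs <;> omega

lemma DQ_nonneg (n k r s : ℤ) : 0 ≤ DQ n k r s := by
  unfold DQ
  split_ifs <;> omega

lemma CQ_eq (n k e r s : ℤ) (hk : 2 ≤ k) (hkn : k ≤ n) (hr : 0 ≤ r) (hrn : r ≤ n) (hs : 0 ≤ s)
    (hsn : s ≤ n) :
    CQ n k e r s = GQ n k r s + if (r - e) % 2 = 0 then DQ n k r s else 0 := by
  unfold CQ
  rw [GQ_diff n k r s hk hkn hr hrn hs hsn]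
  unfold DQ
  split_ifs <;> omega

lemma RD_step (n k e i j : ℤ) (hk : 2 ≤ k) (hkn : k ≤ n) (hi : 0 ≤ i) (hin : i < n) (hj : 0 ≤ j)
    (hjn : j ≤ n) : RQ n k (i + 1) j + (if (i + 1 - e) % 2 = 0 then DQ n k (i + 1) j else 0)
      - (if (i - e) % 2 = 0 then DQ n k i j else 0) = SZ n k e (i + 1) j := by
  unfold RQ DQ SZ
  by_cases h : (i - e) % 2 = 0
  · have h' : ¬ (i + 1 - e) % 2 = 0 := by omega
    simp only [h, h', if_true, if_false]
    split_ifs <;> omega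
  · have h' : (i + 1 - e) % 2 = 0 := by omega
    simp only [h, h', if_true, if_false]
    split_ifs <;> omega

lemma CQ_step (n k e i j : ℤ) (hk : 2 ≤ k) (hkn : k ≤ n) (hi : 0 ≤ i) (hin : i < n) (hj : 0 ≤ j)
    (hjn : j ≤ n) : CQ n k e (i + 1) j - CQ n k e i j = SZ n k e (i + 1) j := by
  rw [CQ_eq n k e (i + 1) j hk hkn (by omega) (by omega) hj hjn,
    CQ_eq n k e i j hk hkn (by omega) (by omega) hj hjn, ← RD_step n k e i j hk hkn hi hin hj hjn,
    ← GQ_step n k i j (by omega) hkn hi hin hj hjn]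
  ring

lemma SZ_step (n k e i j : ℤ) (hk : 2 ≤ k) (hkn : k ≤ n) (hi : 1 ≤ i) (hin : i ≤ n) (hj : 0 ≤ j)
    (hjn : j < n) : SZ n k e i (j + 1) - SZ n k e i j = PZ n k e i (j + 1) := by
  unfold SZ PZ
  split_ifs <;> omega

/-- Integer version of `Fmat`. -/
def FZ (n k i j : ℤ) : ℤ :=
  if k + 1 ≤ i + j ∧ i + j ≤ 2 * n - k + 1 ∧ i - j ≤ k - 1 ∧ j - i ≤ k - 1
  then 1 - 2 * ((i + j - k - 1) % 2) else 0

lemma RQ_step (n k i j : ℤ) (hk : 1 ≤ k) (hkn : k ≤ n) (hi : 1 ≤ i) (hin : i ≤ n) (hj : 0 ≤ j)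
    (hjn : j < n) : RQ n k i (j + 1) - RQ n k i j = FZ n k i (j + 1) := by
  unfold RQ FZ
  split_ifs <;> omega

lemma Fmat_eq (n k i j : ℕ) : Fmat n k i j = ((FZ n k i j : ℤ) : ℝ) := by
  unfold Fmat FZ
  have hc : (k + 1 ≤ i + j ∧ (i : ℤ) + j ≤ 2 * n - k + 1 ∧ |(i : ℤ) - j| ≤ (k : ℤ) - 1) ↔
      ((k : ℤ) + 1 ≤ i + j ∧ (i : ℤ) + j ≤ 2 * n - k + 1 ∧ (i : ℤ) - j ≤ k - 1 ∧
        (j : ℤ) - i ≤ k - 1) := by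
    rw [abs_le]
    constructor
    · rintro ⟨h1, h2, h3, h4⟩
      refine ⟨?_, ?_, ?_, ?_⟩ <;> omega
    · rintro ⟨h1, h2, h3, h4⟩
      refine ⟨?_, ?_, ?_, ?_⟩ <;> omega
  by_cases h : ((k : ℤ) + 1 ≤ i + j ∧ (i : ℤ) + j ≤ 2 * n - k + 1 ∧ (i : ℤ) - j ≤ k - 1 ∧
        (j : ℤ) - i ≤ k - 1)
  · rw [if_pos h, if_pos (hc.2 h)]
    obtain ⟨m, hm⟩ : ∃ m : ℕ, i + j = m + k + 1 := ⟨i + j - k - 1, by omega⟩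
    have e1 : i + j - k - 1 = m := by omega
    have e2 : (i : ℤ) + j - k - 1 = m := by omega
    rw [e1, e2]
    rcases Nat.even_or_odd m with hm | hm
    · have : (m : ℤ) % 2 = 0 := by rcases hm with ⟨t, rfl⟩; omega
      rw [hm.neg_one_pow, this]; norm_num
    · have : (m : ℤ) % 2 = 1 := by rcases hm with ⟨t, rfl⟩; omega
      rw [hm.neg_one_pow, this]; norm_num
  · rw [if_neg h, if_neg (fun hh => h (hc.1 hh))]
    norm_num

/-- Telescoping: a matrix with prescribed row partial sums and closed form. -/
lemma Qmat_closed (n : ℕ) (a : ℕ → ℕ → ℝ) (g R : ℕ → ℕ → ℤ)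
    (h0 : ∀ s, s ≤ n → g 0 s = 0) (hR0 : ∀ i, i < n → R (i + 1) 0 = 0)
    (hg : ∀ i j, i < n → j ≤ n → g (i + 1) j - g i j = R (i + 1) j)
    (hR : ∀ i j, i < n → j < n → a (i + 1) (j + 1) = ((R (i + 1) (j + 1) - R (i + 1) j : ℤ) : ℝ))
    (r s : ℕ) (hr : r ≤ n) (hs : s ≤ n) : Qmat a r s = (g r s : ℝ) := by
  have row : ∀ i, i < n → ∀ s, s ≤ n → ∑ j ∈ Icc 1 s, a (i + 1) j = (R (i + 1) s : ℝ) := by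
    intro i hi s
    induction s with
    | zero => intro _; simp [hR0 i hi]
    | succ s ih =>
      intro hs
      rw [Finset.sum_Icc_succ_top (by omega), ih (by omega), hR i s hi (by omega)]
      push_cast; ring
  unfold Qmat
  induction r with
  | zero => simp [h0 s hs]
  | succ r ih =>
    rw [Finset.sum_Icc_succ_top (by omega), ih (by omega), row r (by omega) s hs,
      ← hg r s (by omega) hs]
    push_cast; ring

lemma QF_closed (n k : ℕ) (hk : 1 ≤ k) (hkn : k ≤ n) (r s : ℕ) (hr : r ≤ n) (hs : s ≤ n) :
    Qmat (Fmat n k) r s = ((GQ n k r s : ℤ) : ℝ) := by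
  refine Qmat_closed n (Fmat n k) (fun r s => GQ n k r s) (fun i j => RQ n k i j)
    ?_ ?_ ?_ ?_ r s hr hs
  · intro s hs; simp only [GQ]; omega
  · intro i hi; simp only [RQ]; split_ifs <;> omega
  · intro i j hi hj
    have := GQ_step n k i j (by omega) (by omega) (by omega) (by omega) (by omega) (by omega)
    push_cast; exact this
  · intro i j hi hj
    have := RQ_step n k (i + 1) j (by omega) (by omega) (by omega) (by omega) (by omega) (by omega)
    rw [Fmat_eq]; push_cast; rw [← this]; push_cast; ring

/-- The permutation matrices. -/
noncomputable def PR (n k : ℕ) (e : ℤ) : ℕ → ℕ → ℝ := fun i j => ((PZ n k e i j : ℤ) : ℝ)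

lemma PR_closed (n k : ℕ) (e : ℤ) (hk : 2 ≤ k) (hkn : k ≤ n) (r s : ℕ) (hr : r ≤ n)
    (hs : s ≤ n) : Qmat (PR n k e) r s = ((CQ n k e r s : ℤ) : ℝ) := by
  refine Qmat_closed n (PR n k e) (fun r s => CQ n k e r s) (fun i j => SZ n k e i j)
    ?_ ?_ ?_ ?_ r s hr hs
  · intro s hs; simp only [CQ, GQ]; split_ifs <;> omega
  · intro i hi; simp only [SZ]; split_ifs <;> omega
  · intro i j hi hj
    have := CQ_step n k e i j (by omega) (by omega) (by omega) (by omega) (by omega) (by omega)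
    push_cast; exact this
  · intro i j hi hj
    have := SZ_step n k e (i + 1) j (by omega) (by omega) (by omega) (by omega) (by omega)
      (by omega)
    simp only [PR]; push_cast; rw [← this]; push_cast; ring

lemma CQ_top (n k e r : ℤ) (hk : 2 ≤ k) (hkn : k ≤ n) (hr : 0 ≤ r) (hrn : r ≤ n) :
    CQ n k e r n = r ∧ CQ n k e n r = r := by
  unfold CQ GQ
  constructor <;> split_ifs <;> omega

lemma PR_perm (n k : ℕ) (e : ℤ) (hk : 2 ≤ k) (hkn : k ≤ n) : IsPermMatrix n (PR n k e) := by
  refine ⟨?_, ?_, ?_, ?_⟩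
  · intro i j h
    simp only [PR, PZ]
    rw [if_neg (by omega)]; simp
  · intro i j
    simp only [PR, PZ]
    split_ifs <;> simp
  · intro i h1 h2
    obtain ⟨i, rfl⟩ : ∃ m, i = m + 1 := ⟨i - 1, by omega⟩
    have a1 := PR_closed n k e hk hkn (i + 1) n h2 le_rfl
    have a2 := PR_closed n k e hk hkn i n (by omega) le_rfl
    rw [(CQ_top n k e _ (by omega) (by omega) (by omega) (by omega)).1] at a1 a2
    unfold Qmat at a1 a2
    rw [Finset.sum_Icc_succ_top (by omega), a2] at a1
    push_cast at a1; linarith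
  · intro j h1 h2
    obtain ⟨j, rfl⟩ : ∃ m, j = m + 1 := ⟨j - 1, by omega⟩
    have a1 := PR_closed n k e hk hkn n (j + 1) le_rfl h2
    have a2 := PR_closed n k e hk hkn n j le_rfl (by omega)
    rw [(CQ_top n k e _ (by omega) (by omega) (by omega) (by omega)).2] at a1 a2
    unfold Qmat at a1 a2
    rw [Finset.sum_comm] at a1 a2
    rw [Finset.sum_Icc_succ_top (by omega), a2] at a1
    push_cast at a1; linarith

lemma copula_of_perm (n : ℕ) (P : ℕ → ℕ → ℝ) (hP : IsPermMatrix n P) :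
    DiscCopula n (Qmat P) := by
  obtain ⟨-, h01, hrow, hcol⟩ := hP
  have hnn : ∀ i j, 0 ≤ P i j := fun i j => by
    rcases h01 i j with h | h <;> rw [h] <;> norm_num
  have hvol : ∀ i j k l, i ≤ j → k ≤ l → 0 ≤ vol (Qmat P) i j k l := by
    intro i j k l hij hkl
    have hm : ∀ m, 0 ≤ ∑ t ∈ Icc 1 l, P m t - ∑ t ∈ Icc 1 k, P m t := fun m =>
      sub_nonneg.2 (Finset.sum_le_sum_of_subset_of_nonneg (Finset.Icc_subset_Icc_right hkl)
        (fun t _ _ => hnn m t))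
    have := Finset.sum_le_sum_of_subset_of_nonneg (Finset.Icc_subset_Icc_right hij : Icc 1 i ⊆ Icc 1 j)
      (fun m _ _ => hm m)
    rw [Finset.sum_sub_distrib, Finset.sum_sub_distrib] at this
    unfold vol Qmat
    linarith
  have hb : DiscBoundary n (Qmat P) := by
    intro i hi
    refine ⟨by simp [Qmat], by simp [Qmat], ?_, ?_⟩
    · unfold Qmat
      rw [Finset.sum_congr rfl (g := fun _ => (1 : ℝ))]
      · simp
      · intro x hx
        rw [Finset.mem_Icc] at hx
        exact hrow x hx.1 (by omega)
    · unfold Qmat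
      rw [Finset.sum_comm, Finset.sum_congr rfl (g := fun _ => (1 : ℝ))]
      · simp
      · intro x hx
        rw [Finset.mem_Icc] at hx
        exact hcol x hx.1 (by omega)
  have m1 : ∀ i i' j, i ≤ i' → i' ≤ n → j ≤ n → Qmat P i j ≤ Qmat P i' j := by
    intro i i' j h1 h2 h3
    have := hvol i i' 0 j h1 (by omega)
    unfold vol at this
    rw [(hb i (by omega)).1, (hb i' h2).1] at this
    linarith
  have m2 : ∀ i j j', j ≤ j' → j' ≤ n → i ≤ n → Qmat P i j ≤ Qmat P i j' := by
    intro i j j' h1 h2 h3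
    have := hvol 0 i j j' (by omega) h1
    unfold vol at this
    rw [(hb j (by omega)).2.1, (hb j' h2).2.1] at this
    linarith
  have l1 : ∀ i i' j, i ≤ i' → i' ≤ n → j ≤ n → Qmat P i' j - Qmat P i j ≤ i' - i := by
    intro i i' j h1 h2 h3
    have := hvol i i' j n h1 h3
    unfold vol at this
    rw [(hb i (by omega)).2.2.1, (hb i' h2).2.2.1] at this
    linarith
  have l2 : ∀ i j j', j ≤ j' → j' ≤ n → i ≤ n → Qmat P i j' - Qmat P i j ≤ j' - j := by
    intro i j j' h1 h2 h3
    have := hvol i n j j' h3 h1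
    unfold vol at this
    rw [(hb j (by omega)).2.2.2, (hb j' h2).2.2.2] at this
    linarith
  have a1 : ∀ i i' j, i ≤ n → i' ≤ n → j ≤ n → |Qmat P i j - Qmat P i' j| ≤ |(i : ℝ) - i'| := by
    intro i i' j h1 h2 h3
    rcases le_total i i' with h | h
    · rw [abs_sub_comm, abs_sub_comm (i : ℝ), abs_of_nonneg (sub_nonneg.2 (m1 i i' j h h2 h3))]
      exact (l1 i i' j h h2 h3).trans (le_abs_self _)
    · rw [abs_of_nonneg (sub_nonneg.2 (m1 i' i j h h1 h3))]
      exact (l1 i' i j h h1 h3).trans (le_abs_self _)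
  have a2 : ∀ i j j', i ≤ n → j ≤ n → j' ≤ n → |Qmat P i j - Qmat P i j'| ≤ |(j : ℝ) - j'| := by
    intro i j j' h1 h2 h3
    rcases le_total j j' with h | h
    · rw [abs_sub_comm, abs_sub_comm (j : ℝ), abs_of_nonneg (sub_nonneg.2 (m2 i j j' h h3 h1))]
      exact (l2 i j j' h h3 h1).trans (le_abs_self _)
    · rw [abs_of_nonneg (sub_nonneg.2 (m2 i j' j h h2 h1))]
      exact (l2 i j' j h h2 h1).trans (le_abs_self _)
  refine ⟨⟨hb, m1, m2, ?_⟩, fun i j k l h1 _ h3 _ => hvol i j k l h1 h3⟩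
  intro i i' j j' h1 h2 h3 h4
  exact (abs_sub_le _ (Qmat P i' j) _).trans (add_le_add (a1 i i' j h1 h2 h3) (a2 i' j j' h2 h3 h4))

lemma CQ_minmax (n k r s : ℤ) (hk : 2 ≤ k) (hkn : k ≤ n) (hr : 0 ≤ r) (hrn : r ≤ n) (hs : 0 ≤ s)
    (hsn : s ≤ n) : GQ n k r s = min (CQ n k 0 r s) (CQ n k 1 r s) ∧
      GQ n (k - 1) r s = max (CQ n k 0 r s) (CQ n k 1 r s) := by
  have hd := DQ_nonneg n k r s
  rw [CQ_eq n k 0 r s hk hkn hr hrn hs hsn, CQ_eq n k 1 r s hk hkn hr hrn hs hsn,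
    GQ_diff n k r s hk hkn hr hrn hs hsn]
  generalize DQ n k r s = d at *
  generalize GQ n k r s = g at *
  constructor <;> split_ifs <;> omega

/-- For every `n ≥ 4` and `3 ≤ k ≤ n−1`, there are two discrete copulas
`C₁, C₂` (each corresponding to a permutation matrix) whose pointwise min is `Q(F_n^k)`
and pointwise max is `Q(F_n^{k−1})`; consequently `(Q(F_n^k), Q(F_n^{k−1}))` is
coherent: `Q(F_n^k)(r,s)` is the infimum and `Q(F_n^{k−1})(r,s)` the supremum of
`C(r,s)` over all discrete copulas sandwiched between them. -/
theorem QFk_coherent (n k : ℕ) (hn : 4 ≤ n) (hk1 : 3 ≤ k) (hk2 : k ≤ n - 1) :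
    (∃ C₁ C₂ : ℕ → ℕ → ℝ,
      DiscCopula n C₁ ∧ DiscCopula n C₂ ∧
      (∃ P₁, IsPermMatrix n P₁ ∧ C₁ = Qmat P₁) ∧
      (∃ P₂, IsPermMatrix n P₂ ∧ C₂ = Qmat P₂) ∧
      (∀ r s, r ≤ n → s ≤ n →
        Qmat (Fmat n k) r s = min (C₁ r s) (C₂ r s) ∧
        Qmat (Fmat n (k - 1)) r s = max (C₁ r s) (C₂ r s))) ∧
    (∀ r s, r ≤ n → s ≤ n →
      IsGLB {x : ℝ | ∃ C : ℕ → ℕ → ℝ, DiscCopula n C ∧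
          (∀ r' s', r' ≤ n → s' ≤ n →
            Qmat (Fmat n k) r' s' ≤ C r' s' ∧ C r' s' ≤ Qmat (Fmat n (k - 1)) r' s') ∧
          x = C r s}
        (Qmat (Fmat n k) r s) ∧
      IsLUB {x : ℝ | ∃ C : ℕ → ℕ → ℝ, DiscCopula n C ∧
          (∀ r' s', r' ≤ n → s' ≤ n →
            Qmat (Fmat n k) r' s' ≤ C r' s' ∧ C r' s' ≤ Qmat (Fmat n (k - 1)) r' s') ∧
          x = C r s}
        (Qmat (Fmat n (k - 1)) r s)) := by
  have hk2' : k ≤ n := by omega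
  have key : ∀ r s, r ≤ n → s ≤ n →
        Qmat (Fmat n k) r s = min (Qmat (PR n k 0) r s) (Qmat (PR n k 1) r s) ∧
        Qmat (Fmat n (k - 1)) r s = max (Qmat (PR n k 0) r s) (Qmat (PR n k 1) r s) := by
    intro r s hr hs
    have hh := CQ_minmax n k r s (by omega) (by omega) (by omega) (by omega) (by omega) (by omega)
    rw [QF_closed n k (by omega) hk2' r s hr hs, QF_closed n (k - 1) (by omega) (by omega) r s hr hs,
      PR_closed n k 0 (by omega) hk2' r s hr hs, PR_closed n k 1 (by omega) hk2' r s hr hs,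
      Nat.cast_sub (by omega : 1 ≤ k), Nat.cast_one, hh.1, hh.2]
    exact ⟨Int.cast_min, Int.cast_max⟩
  have p0 := PR_perm n k 0 (by omega) hk2'
  have p1 := PR_perm n k 1 (by omega) hk2'
  have c0 := copula_of_perm n _ p0
  have c1 := copula_of_perm n _ p1
  refine ⟨⟨Qmat (PR n k 0), Qmat (PR n k 1), c0, c1, ⟨_, p0, rfl⟩, ⟨_, p1, rfl⟩, key⟩, ?_⟩
  intro r s hr hs
  have b0 : ∀ r' s', r' ≤ n → s' ≤ n → Qmat (Fmat n k) r' s' ≤ Qmat (PR n k 0) r' s' ∧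
      Qmat (PR n k 0) r' s' ≤ Qmat (Fmat n (k - 1)) r' s' := by
    intro r' s' hr' hs'
    rw [(key r' s' hr' hs').1, (key r' s' hr' hs').2]
    exact ⟨min_le_left _ _, le_max_left _ _⟩
  have b1 : ∀ r' s', r' ≤ n → s' ≤ n → Qmat (Fmat n k) r' s' ≤ Qmat (PR n k 1) r' s' ∧
      Qmat (PR n k 1) r' s' ≤ Qmat (Fmat n (k - 1)) r' s' := by
    intro r' s' hr' hs'
    rw [(key r' s' hr' hs').1, (key r' s' hr' hs').2]
    exact ⟨min_le_right _ _, le_max_right _ _⟩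
  constructor
  · refine IsLeast.isGLB ⟨?_, ?_⟩
    · rcases min_choice (Qmat (PR n k 0) r s) (Qmat (PR n k 1) r s) with h | h
      · exact ⟨_, c0, b0, (key r s hr hs).1.trans h⟩
      · exact ⟨_, c1, b1, (key r s hr hs).1.trans h⟩
    · rintro x ⟨C, -, hC, rfl⟩
      exact (hC r s hr hs).1
  · refine IsGreatest.isLUB ⟨?_, ?_⟩
    · rcases max_choice (Qmat (PR n k 0) r s) (Qmat (PR n k 1) r s) with h | h
      · exact ⟨_, c0, b0, (key r s hr hs).2.trans h⟩
      · exact ⟨_, c1, b1, (key r s hr hs).2.trans h⟩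
    · rintro x ⟨C, -, hC, rfl⟩
      exact (hC r s hr hs).2
end

section
/- For every n ≥ 7, the matrices A_n and B_n are alternating sign matrices, and the pair (Q(A_n), Q(B_n)) is a self-dual imprecise copula: it is an imprecise copula with Q(A_n)_M = Q(B_n) and Q(B_n)_O = Q(A_n). -/
open Finset

/-- The matrix `A_n` of Section 5 (non-dense construction), `n ≥ 7`. -/
noncomputable def Amat (n : ℕ) : ℕ → ℕ → ℝ := fun r c =>
  if r + c = n ∧ 1 ≤ c ∧ c ≤ n - 1 then 1
  else if r + c = n + 2 ∧ 3 ≤ c ∧ c ≤ n - 1 then -1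
  else if r + c = n + 3 ∧ 3 ≤ c ∧ c ≤ n then 1
  else 0

/-- The matrix `B_n` of Section 5 (non-dense construction), `n ≥ 7`. -/
noncomputable def Bmat (n : ℕ) : ℕ → ℕ → ℝ := fun r c =>
  if r + c = n - 1 ∧ 1 ≤ c ∧ c ≤ n - 2 then 1
  else if r + c = n + 1 ∧ 3 ≤ c ∧ c ≤ n - 2 then -1
  else if r + c = n + 2 ∧ 3 ≤ c ∧ c ≤ n - 1 then 1
  else if r + c = n + 4 ∧ 5 ≤ c ∧ c ≤ n - 1 then -1
  else if r + c = n + 5 ∧ 5 ≤ c ∧ c ≤ n then 1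
  else 0


/-- One-dimensional profile of `Q(A_n)`. -/
def profA (t : ℤ) : ℤ := max (max 0 (min (t + 1) 2)) t

/-- One-dimensional profile of `Q(B_n)`. -/
def profB (t : ℤ) : ℤ := max (max (max 0 (min (t + 2) 2)) (min (t + 1) 4)) t

/-- Function with a given profile. -/
def capF (f : ℤ → ℤ) (n r s : ℕ) : ℤ := min (min (r : ℤ) s) (f ((r : ℤ) + s - n))

/-- Hypotheses on a profile. -/
structure GoodProf (f : ℤ → ℤ) : Prop where
  nonneg : ∀ t, 0 ≤ f t
  ge : ∀ t, t ≤ f t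
  zero : ∀ t, t ≤ -2 → f t = 0
  large : ∀ t, 5 ≤ t → f t = t
  mono : ∀ t u, t ≤ u → f t ≤ f u
  lip : ∀ t u, t ≤ u → f u ≤ f t + (u - t)

theorem goodA : GoodProf profA := by
  constructor <;> intros <;> unfold profA <;> omega

theorem goodB : GoodProf profB := by
  constructor <;> intros <;> unfold profB <;> omega

theorem profA_le_profB (t : ℤ) : profA t ≤ profB t := by
  unfold profA profB; omega

section Cap
variable {f g : ℤ → ℤ} {n : ℕ}

theorem cap_le_left (r s : ℕ) : capF f n r s ≤ r := by unfold capF; omega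
theorem cap_le_right (r s : ℕ) : capF f n r s ≤ s := by unfold capF; omega
theorem cap_le_prof (r s : ℕ) : capF f n r s ≤ f ((r : ℤ) + s - n) := by unfold capF; omega

theorem cap_cases (r s : ℕ) :
    capF f n r s = r ∨ capF f n r s = s ∨ capF f n r s = f ((r : ℤ) + s - n) := by
  unfold capF; omega

theorem cap_comm (r s : ℕ) : capF f n r s = capF f n s r := by
  unfold capF; rw [min_comm (r : ℤ) s, add_comm (r : ℤ) s]

theorem cap_zero_right (hf : GoodProf f) (r : ℕ) : capF f n r 0 = 0 := by
  have := hf.nonneg ((r : ℤ) + (0 : ℕ) - n)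
  unfold capF; omega

theorem cap_zero_left (hf : GoodProf f) (r : ℕ) : capF f n 0 r = 0 := by
  rw [cap_comm, cap_zero_right hf]

theorem cap_n_right (hf : GoodProf f) (r : ℕ) (h : r ≤ n) : capF f n r n = r := by
  have := hf.ge ((r : ℤ) + n - n)
  unfold capF; omega

theorem cap_n_left (hf : GoodProf f) (r : ℕ) (h : r ≤ n) : capF f n n r = r := by
  rw [cap_comm, cap_n_right hf r h]

theorem cap_mono_left (hf : GoodProf f) (i j s : ℕ) (h : i ≤ j) :
    capF f n i s ≤ capF f n j s := by
  have := hf.mono ((i : ℤ) + s - n) ((j : ℤ) + s - n) (by omega)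
  unfold capF; omega

theorem cap_lip_left (hf : GoodProf f) (i j s : ℕ) (h : i ≤ j) :
    capF f n j s ≤ capF f n i s + (j - i) := by
  have := hf.lip ((i : ℤ) + s - n) ((j : ℤ) + s - n) (by omega)
  unfold capF; omega

theorem cap_mono_right (hf : GoodProf f) (i j s : ℕ) (h : i ≤ j) :
    capF f n s i ≤ capF f n s j := by
  rw [cap_comm s, cap_comm s]; exact cap_mono_left hf i j s h

theorem cap_lip_right (hf : GoodProf f) (i j s : ℕ) (h : i ≤ j) :
    capF f n s j ≤ capF f n s i + (j - i) := by
  rw [cap_comm s, cap_comm s]; exact cap_lip_left hf i j s h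

theorem cap_le_cap (h : ∀ t, f t ≤ g t) (r s : ℕ) : capF f n r s ≤ capF g n r s := by
  have := h ((r : ℤ) + s - n)
  unfold capF; omega

end Cap

/-- The general two-dimensional inequality from the one-dimensional one. -/
theorem cap_ineq {a b c d : ℤ → ℤ} {n : ℕ}
    (gc : GoodProf c) (gd : GoodProf d)
    (hca : ∀ t, c t ≤ a t) (hcb : ∀ t, c t ≤ b t) (hda : ∀ t, d t ≤ a t) (hdb : ∀ t, d t ≤ b t)
    (h : ∀ x p q : ℤ, 0 ≤ p → 0 ≤ q → c (x + p) + d (x + q) ≤ a x + b (x + p + q))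
    (i j k l : ℕ) (hij : i ≤ j) (hkl : k ≤ l) :
    0 ≤ capF a n i k + capF b n j l - capF c n i l - capF d n j k := by
  have c1 := cap_le_left (f := c) (n := n) i l
  have c2 := cap_le_right (f := d) (n := n) j k
  have c3 := cap_le_prof (f := c) (n := n) i l
  have c4 := cap_le_prof (f := d) (n := n) j k
  have d1 := cap_lip_left (n := n) gd i j k hij
  have d2 := cap_lip_right (n := n) gc k l i hkl
  have d3 := cap_mono_left (n := n) gc i j l hij
  have d4 := cap_mono_right (n := n) gd k l j hkl
  have e1 := cap_le_cap (n := n) hca i k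
  have e2 := cap_le_cap (n := n) hcb j l
  have e3 := cap_le_cap (n := n) hda i k
  have e4 := cap_le_cap (n := n) hdb j l
  have h1 := h ((i : ℤ) + k - n) (l - k) (j - i) (by omega) (by omega)
  have r1 : (i : ℤ) + k - n + (l - k) = i + l - n := by ring
  have r2 : (i : ℤ) + k - n + (j - i) = j + k - n := by ring
  have r3 : (i : ℤ) + l - n + (j - i) = j + l - n := by ring
  rw [r1, r2, r3] at h1
  rcases cap_cases (f := a) (n := n) i k with u | u | u <;>
  rcases cap_cases (f := b) (n := n) j l with v | v | v <;>
  omega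

theorem one_dim1 (x p q : ℤ) (hp : 0 ≤ p) (hq : 0 ≤ q) :
    profA (x + p) + profA (x + q) ≤ profB x + profA (x + p + q) := by
  unfold profA profB; omega
theorem one_dim2 (x p q : ℤ) (hp : 0 ≤ p) (hq : 0 ≤ q) :
    profA (x + p) + profA (x + q) ≤ profA x + profB (x + p + q) := by
  unfold profA profB; omega
theorem one_dim3 (x p q : ℤ) (hp : 0 ≤ p) (hq : 0 ≤ q) :
    profB (x + p) + profA (x + q) ≤ profB x + profB (x + p + q) := by
  unfold profA profB; omega
theorem one_dim4 (x p q : ℤ) (hp : 0 ≤ p) (hq : 0 ≤ q) :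
    profA (x + p) + profB (x + q) ≤ profB x + profB (x + p + q) := by
  have := one_dim3 x q p hq hp
  rw [show x + q + p = x + p + q by ring] at this
  omega

section Tele
variable {n : ℕ} {a : ℕ → ℕ → ℝ} {f : ℤ → ℤ}

/-- Entry identity. -/
def Entry (n : ℕ) (a : ℕ → ℕ → ℝ) (f : ℤ → ℤ) : Prop :=
  ∀ r s, r < n → s < n → a (r + 1) (s + 1) =
    ((capF f n (r + 1) (s + 1) - capF f n r (s + 1) - capF f n (r + 1) s + capF f n r s : ℤ) : ℝ)

theorem row_sum (hf : GoodProf f) (h : Entry n a f) (r : ℕ) (hr : r < n) :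
    ∀ t, t ≤ n → ∑ j ∈ Icc 1 t, a (r + 1) j = ((capF f n (r + 1) t - capF f n r t : ℤ) : ℝ) := by
  intro t
  induction t with
  | zero => intro _; simp [cap_zero_right hf]
  | succ t ih =>
    intro ht
    rw [Finset.sum_Icc_succ_top (by omega), ih (by omega), h r t hr (by omega)]
    push_cast; ring

theorem col_sum (hf : GoodProf f) (h : Entry n a f) (s : ℕ) (hs : s < n) :
    ∀ t, t ≤ n → ∑ i ∈ Icc 1 t, a i (s + 1) = ((capF f n t (s + 1) - capF f n t s : ℤ) : ℝ) := by
  intro t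
  induction t with
  | zero => intro _; simp [cap_zero_left hf]
  | succ t ih =>
    intro ht
    rw [Finset.sum_Icc_succ_top (by omega), ih (by omega), h t s (by omega) hs]
    push_cast; ring

theorem Qmat_eq_s17 (hf : GoodProf f) (h : Entry n a f) (s : ℕ) (hs : s ≤ n) :
    ∀ r, r ≤ n → Qmat a r s = ((capF f n r s : ℤ) : ℝ) := by
  intro r
  unfold Qmat
  induction r with
  | zero => intro _; simp [cap_zero_left hf]
  | succ r ih =>
    intro hr
    rw [Finset.sum_Icc_succ_top (by omega), ih (by omega), row_sum hf h r (by omega) s hs]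
    push_cast; ring

theorem asm_of (hf : GoodProf f) (h : Entry n a f)
    (h0 : ∀ i j, ¬(1 ≤ i ∧ i ≤ n ∧ 1 ≤ j ∧ j ≤ n) → a i j = 0)
    (h1 : ∀ i j, a i j = -1 ∨ a i j = 0 ∨ a i j = 1) : IsASM n a := by
  refine ⟨h0, h1, ?_, ?_, ?_, ?_⟩
  · intro i hi hin
    obtain ⟨r, rfl⟩ : ∃ r, i = r + 1 := ⟨i - 1, by omega⟩
    rw [row_sum hf h r (by omega) n le_rfl, cap_n_right hf _ hin, cap_n_right hf _ (by omega)]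
    push_cast; ring
  · intro i hi hin
    obtain ⟨r, rfl⟩ : ∃ r, i = r + 1 := ⟨i - 1, by omega⟩
    rw [col_sum hf h r (by omega) n le_rfl, cap_n_left hf _ hin, cap_n_left hf _ (by omega)]
    push_cast; ring
  · intro i t hi hin ht
    obtain ⟨r, rfl⟩ : ∃ r, i = r + 1 := ⟨i - 1, by omega⟩
    rw [row_sum hf h r (by omega) t ht]
    have e1 := cap_mono_left (n := n) hf r (r + 1) t (by omega)
    have e2 := cap_lip_left (n := n) hf r (r + 1) t (by omega)
    have : capF f n (r + 1) t - capF f n r t = 0 ∨ capF f n (r + 1) t - capF f n r t = 1 := by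
      push_cast at e2; omega
    rcases this with e | e <;> simp [e]
  · intro i t hi hin ht
    obtain ⟨r, rfl⟩ : ∃ r, i = r + 1 := ⟨i - 1, by omega⟩
    rw [col_sum hf h r (by omega) t ht]
    have e1 := cap_mono_right (n := n) hf r (r + 1) t (by omega)
    have e2 := cap_lip_right (n := n) hf r (r + 1) t (by omega)
    have : capF f n t (r + 1) - capF f n t r = 0 ∨ capF f n t (r + 1) - capF f n t r = 1 := by
      push_cast at e2; omega
    rcases this with e | e <;> simp [e]

theorem boundary_of (hf : GoodProf f) (h : Entry n a f) : DiscBoundary n (Qmat a) := by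
  intro i hi
  rw [Qmat_eq_s17 hf h 0 (by omega) i hi, Qmat_eq_s17 hf h i hi 0 (by omega),
    Qmat_eq_s17 hf h n le_rfl i hi, Qmat_eq_s17 hf h i hi n le_rfl,
    cap_zero_left hf, cap_zero_right hf, cap_n_left hf i hi, cap_n_right hf i hi]
  simp

end Tele

theorem profA_table (t : ℤ) :
    (t ≤ -4 ∧ profA t = 0 ∧ profA (t + 1) = 0 ∧ profA (t + 2) = 0) ∨
    (t = -3 ∧ profA t = 0 ∧ profA (t + 1) = 0 ∧ profA (t + 2) = 0) ∨
    (t = -2 ∧ profA t = 0 ∧ profA (t + 1) = 0 ∧ profA (t + 2) = 1) ∨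
    (t = -1 ∧ profA t = 0 ∧ profA (t + 1) = 1 ∧ profA (t + 2) = 2) ∨
    (t = 0 ∧ profA t = 1 ∧ profA (t + 1) = 2 ∧ profA (t + 2) = 2) ∨
    (t = 1 ∧ profA t = 2 ∧ profA (t + 1) = 2 ∧ profA (t + 2) = 3) ∨
    (t = 2 ∧ profA t = 2 ∧ profA (t + 1) = 3 ∧ profA (t + 2) = 4) ∨
    (t = 3 ∧ profA t = 3 ∧ profA (t + 1) = 4 ∧ profA (t + 2) = 5) ∨
    (t = 4 ∧ profA t = 4 ∧ profA (t + 1) = 5 ∧ profA (t + 2) = 6) ∨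
    (5 ≤ t ∧ profA t = t ∧ profA (t + 1) = t + 1 ∧ profA (t + 2) = t + 2) := by
  have h : t ≤ -4 ∨ t = -3 ∨ t = -2 ∨ t = -1 ∨ t = 0 ∨ t = 1 ∨ t = 2 ∨ t = 3 ∨ t = 4 ∨ 5 ≤ t := by
    omega
  unfold profA
  rcases h with h | rfl | rfl | rfl | rfl | rfl | rfl | rfl | rfl | h
  · left; omega
  all_goals first
    | norm_num; done
    | (iterate 9 right); omega

theorem profB_table (t : ℤ) :
    (t ≤ -4 ∧ profB t = 0 ∧ profB (t + 1) = 0 ∧ profB (t + 2) = 0) ∨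
    (t = -3 ∧ profB t = 0 ∧ profB (t + 1) = 0 ∧ profB (t + 2) = 1) ∨
    (t = -2 ∧ profB t = 0 ∧ profB (t + 1) = 1 ∧ profB (t + 2) = 2) ∨
    (t = -1 ∧ profB t = 1 ∧ profB (t + 1) = 2 ∧ profB (t + 2) = 2) ∨
    (t = 0 ∧ profB t = 2 ∧ profB (t + 1) = 2 ∧ profB (t + 2) = 3) ∨
    (t = 1 ∧ profB t = 2 ∧ profB (t + 1) = 3 ∧ profB (t + 2) = 4) ∨
    (t = 2 ∧ profB t = 3 ∧ profB (t + 1) = 4 ∧ profB (t + 2) = 4) ∨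
    (t = 3 ∧ profB t = 4 ∧ profB (t + 1) = 4 ∧ profB (t + 2) = 5) ∨
    (t = 4 ∧ profB t = 4 ∧ profB (t + 1) = 5 ∧ profB (t + 2) = 6) ∨
    (5 ≤ t ∧ profB t = t ∧ profB (t + 1) = t + 1 ∧ profB (t + 2) = t + 2) := by
  have h : t ≤ -4 ∨ t = -3 ∨ t = -2 ∨ t = -1 ∨ t = 0 ∨ t = 1 ∨ t = 2 ∨ t = 3 ∨ t = 4 ∨ 5 ≤ t := by
    omega
  unfold profB
  rcases h with h | rfl | rfl | rfl | rfl | rfl | rfl | rfl | rfl | h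
  · left; omega
  all_goals first
    | norm_num; done
    | (iterate 9 right); omega

set_option maxHeartbeats 4000000 in
theorem entryA (n : ℕ) (hn : 7 ≤ n) : Entry n (Amat n) profA := by
  intro r s hr hs
  have key : capF profA n (r + 1) (s + 1) - capF profA n r (s + 1) - capF profA n (r + 1) s
      + capF profA n r s = if r + 1 + (s + 1) = n ∧ 1 ≤ s + 1 ∧ s + 1 ≤ n - 1 then 1
      else if r + 1 + (s + 1) = n + 2 ∧ 3 ≤ s + 1 ∧ s + 1 ≤ n - 1 then -1
      else if r + 1 + (s + 1) = n + 3 ∧ 3 ≤ s + 1 ∧ s + 1 ≤ n then 1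
      else 0 := by
    have T := profA_table ((r : ℤ) + s - n)
    have a1 : ((r + 1 : ℕ) : ℤ) + ((s + 1 : ℕ) : ℤ) - n = (r : ℤ) + s - n + 2 := by push_cast; ring
    have a2 : (r : ℤ) + ((s + 1 : ℕ) : ℤ) - n = (r : ℤ) + s - n + 1 := by push_cast; ring
    have a3 : ((r + 1 : ℕ) : ℤ) + (s : ℤ) - n = (r : ℤ) + s - n + 1 := by push_cast; ring
    unfold capF
    rw [a1, a2, a3]
    rcases T with ⟨h, e0, e1, e2⟩ | ⟨h, e0, e1, e2⟩ | ⟨h, e0, e1, e2⟩ | ⟨h, e0, e1, e2⟩ | ⟨h, e0, e1, e2⟩ | ⟨h, e0, e1, e2⟩ | ⟨h, e0, e1, e2⟩ | ⟨h, e0, e1, e2⟩ | ⟨h, e0, e1, e2⟩ | ⟨h, e0, e1, e2⟩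
    all_goals
      rw [e0, e1, e2]
      clear e0 e1 e2 a1 a2 a3
      split_ifs <;> omega
  rw [key]; unfold Amat; push_cast; rfl

set_option maxHeartbeats 4000000 in
theorem entryB (n : ℕ) (hn : 7 ≤ n) : Entry n (Bmat n) profB := by
  intro r s hr hs
  have key : capF profB n (r + 1) (s + 1) - capF profB n r (s + 1) - capF profB n (r + 1) s
      + capF profB n r s = if r + 1 + (s + 1) = n - 1 ∧ 1 ≤ s + 1 ∧ s + 1 ≤ n - 2 then 1
      else if r + 1 + (s + 1) = n + 1 ∧ 3 ≤ s + 1 ∧ s + 1 ≤ n - 2 then -1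
      else if r + 1 + (s + 1) = n + 2 ∧ 3 ≤ s + 1 ∧ s + 1 ≤ n - 1 then 1
      else if r + 1 + (s + 1) = n + 4 ∧ 5 ≤ s + 1 ∧ s + 1 ≤ n - 1 then -1
      else if r + 1 + (s + 1) = n + 5 ∧ 5 ≤ s + 1 ∧ s + 1 ≤ n then 1
      else 0 := by
    have T := profB_table ((r : ℤ) + s - n)
    have a1 : ((r + 1 : ℕ) : ℤ) + ((s + 1 : ℕ) : ℤ) - n = (r : ℤ) + s - n + 2 := by push_cast; ring
    have a2 : (r : ℤ) + ((s + 1 : ℕ) : ℤ) - n = (r : ℤ) + s - n + 1 := by push_cast; ring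
    have a3 : ((r + 1 : ℕ) : ℤ) + (s : ℤ) - n = (r : ℤ) + s - n + 1 := by push_cast; ring
    unfold capF
    rw [a1, a2, a3]
    rcases T with ⟨h, e0, e1, e2⟩ | ⟨h, e0, e1, e2⟩ | ⟨h, e0, e1, e2⟩ | ⟨h, e0, e1, e2⟩ | ⟨h, e0, e1, e2⟩ | ⟨h, e0, e1, e2⟩ | ⟨h, e0, e1, e2⟩ | ⟨h, e0, e1, e2⟩ | ⟨h, e0, e1, e2⟩ | ⟨h, e0, e1, e2⟩
    all_goals
      rw [e0, e1, e2]
      clear e0 e1 e2 a1 a2 a3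
      split_ifs <;> omega
  rw [key]; unfold Bmat; push_cast; rfl

theorem asmA (n : ℕ) (hn : 7 ≤ n) : IsASM n (Amat n) := by
  refine asm_of goodA (entryA n hn) ?_ ?_
  · intro i j h
    unfold Amat
    rw [if_neg (by omega), if_neg (by omega), if_neg (by omega)]
  · intro i j
    unfold Amat
    split_ifs <;> simp

theorem asmB (n : ℕ) (hn : 7 ≤ n) : IsASM n (Bmat n) := by
  refine asm_of goodB (entryB n hn) ?_ ?_
  · intro i j h
    unfold Bmat
    rw [if_neg (by omega), if_neg (by omega), if_neg (by omega), if_neg (by omega),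
      if_neg (by omega)]
  · intro i j
    unfold Bmat
    split_ifs <;> simp

/-- Integer volume. -/
def volZ (Q : ℕ → ℕ → ℤ) (i j k l : ℕ) : ℤ := Q i k + Q j l - Q i l - Q j k

theorem diff_cases (n r s : ℕ) (hn : 7 ≤ n) (hr : r ≤ n) (hs : s ≤ n) :
    capF profA n r s = capF profB n r s ∨
    (capF profB n r s = capF profA n r s + 1 ∧
      ((r + s + 1 = n ∧ 1 ≤ r ∧ 1 ≤ s) ∨ (r + s = n ∧ 2 ≤ r ∧ 2 ≤ s) ∨
       (r + s = n + 2 ∧ 3 ≤ r ∧ 3 ≤ s) ∨ (r + s = n + 3 ∧ 4 ≤ r ∧ 4 ≤ s))) := by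
  unfold capF
  rcases profA_table ((r : ℤ) + s - n) with ⟨h, e, -, -⟩ | ⟨h, e, -, -⟩ | ⟨h, e, -, -⟩ | ⟨h, e, -, -⟩ | ⟨h, e, -, -⟩ | ⟨h, e, -, -⟩ | ⟨h, e, -, -⟩ | ⟨h, e, -, -⟩ | ⟨h, e, -, -⟩ | ⟨h, e, -, -⟩ <;>
  rcases profB_table ((r : ℤ) + s - n) with ⟨h2, e2, -, -⟩ | ⟨h2, e2, -, -⟩ | ⟨h2, e2, -, -⟩ | ⟨h2, e2, -, -⟩ | ⟨h2, e2, -, -⟩ | ⟨h2, e2, -, -⟩ | ⟨h2, e2, -, -⟩ | ⟨h2, e2, -, -⟩ | ⟨h2, e2, -, -⟩ | ⟨h2, e2, -, -⟩ <;>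
  first
    | (exfalso; omega)
    | (rw [e, e2]; clear e e2; omega)

theorem witM (n r s : ℕ) (hn : 7 ≤ n) (hr : r ≤ n) (hs : s ≤ n) :
    capF profA n r s = capF profB n r s ∨
    (∃ x y, r < x ∧ x ≤ n ∧ s < y ∧ y ≤ n ∧
      volZ (capF profA n) r x s y ≤ capF profA n r s - capF profB n r s) ∨
    (∃ x y, x < r ∧ y < s ∧
      volZ (capF profA n) x r y s ≤ capF profA n r s - capF profB n r s) := by
  rcases diff_cases n r s hn hr hs with h | ⟨hd, h⟩
  · exact Or.inl h
  right
  rw [hd]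
  rcases h with h | h | h | h
  · left
    by_cases h1 : r = 1
    · refine ⟨r + 2, s + 1, by omega, by omega, by omega, by omega, ?_⟩
      unfold volZ capF profA; push_cast; omega
    · refine ⟨r + 1, s + 2, by omega, by omega, by omega, by omega, ?_⟩
      unfold volZ capF profA; push_cast; omega
  · left
    refine ⟨r + 1, s + 1, by omega, by omega, by omega, by omega, ?_⟩
    unfold volZ capF profA; push_cast; omega
  · right
    obtain ⟨x, rfl⟩ : ∃ x, r = x + 1 := ⟨r - 1, by omega⟩
    obtain ⟨y, rfl⟩ : ∃ y, s = y + 1 := ⟨s - 1, by omega⟩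
    refine ⟨x, y, by omega, by omega, ?_⟩
    unfold volZ capF profA; push_cast; omega
  · right
    obtain ⟨x, rfl⟩ : ∃ x, r = x + 2 := ⟨r - 2, by omega⟩
    obtain ⟨y, rfl⟩ : ∃ y, s = y + 2 := ⟨s - 2, by omega⟩
    refine ⟨x, y, by omega, by omega, ?_⟩
    unfold volZ capF profA; push_cast; omega

theorem witO_sw (n r s a b : ℕ) (hn : 7 ≤ n) (hr : r ≤ n) (hs : s + b ≤ n)
    (h : (r + (s + b) + 1 = n ∧ 1 ≤ r ∧ r ≤ 3 ∧ a = 2 ∧ b = 1) ∨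
      (r + (s + b) = n ∧ 2 ≤ r ∧ r ≤ 3 ∧ a = 1 ∧ b = 1) ∨
      (r + (s + b) = n + 2 ∧ 3 ≤ r ∧ r ≤ 4 ∧ a = 2 ∧ b = 1) ∨
      (r + (s + b) = n + 3 ∧ r = 4 ∧ a = 1 ∧ b = 1)) :
    volZ (capF profB n) r (r + a) s (s + b) ≤ -1 := by
  rcases h with ⟨h, h1, h2, rfl, rfl⟩ | ⟨h, h1, h2, rfl, rfl⟩ | ⟨h, h1, h2, rfl, rfl⟩ |
    ⟨h, h1, rfl, rfl⟩ <;>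
  · unfold volZ capF profB; push_cast; omega

theorem witO_ne (n r s a b : ℕ) (hn : 7 ≤ n) (hr : r + a ≤ n) (hs : s ≤ n)
    (h : (r + a + s + 1 = n ∧ 4 ≤ r + a ∧ 1 ≤ s ∧ a = 1 ∧ b = 2) ∨
      (r + a + s = n ∧ 4 ≤ r + a ∧ 2 ≤ s ∧ a = 1 ∧ b = 1) ∨
      (r + a + s = n + 2 ∧ 5 ≤ r + a ∧ 3 ≤ s ∧ a = 1 ∧ b = 2) ∨
      (r + a + s = n + 3 ∧ 5 ≤ r + a ∧ 4 ≤ s ∧ a = 1 ∧ b = 1)) :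
    volZ (capF profB n) r (r + a) s (s + b) ≤ -1 := by
  rcases h with ⟨h, h1, h2, rfl, rfl⟩ | ⟨h, h1, h2, rfl, rfl⟩ | ⟨h, h1, h2, rfl, rfl⟩ |
    ⟨h, h1, h2, rfl, rfl⟩ <;>
  · unfold volZ capF profB; push_cast; omega

theorem witO (n r s : ℕ) (hn : 7 ≤ n) (hr : r ≤ n) (hs : s ≤ n) :
    capF profA n r s = capF profB n r s ∨
    (∃ x y, r < x ∧ x ≤ n ∧ y < s ∧
      volZ (capF profB n) r x y s ≤ capF profA n r s - capF profB n r s) ∨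
    (∃ x y, x < r ∧ s < y ∧ y ≤ n ∧
      volZ (capF profB n) x r s y ≤ capF profA n r s - capF profB n r s) := by
  rcases diff_cases n r s hn hr hs with h | ⟨hd, h⟩
  · exact Or.inl h
  right
  have e : capF profA n r s - capF profB n r s = -1 := by omega
  rw [e]
  obtain ⟨x, hx⟩ : ∃ x, r = x + 1 := ⟨r - 1, by omega⟩
  obtain ⟨y, hy⟩ : ∃ y, s = y + 1 := ⟨s - 1, by omega⟩
  rcases h with h | h | h | h
  · by_cases h1 : r ≤ 3
    · left
      refine ⟨r + 2, y, by omega, by omega, by omega, ?_⟩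
      subst hy; exact witO_sw n r y 2 1 hn hr hs (by omega)
    · right
      refine ⟨x, s + 2, by omega, by omega, by omega, ?_⟩
      subst hx; exact witO_ne n x s 1 2 hn hr hs (by omega)
  · by_cases h1 : r ≤ 3
    · left
      refine ⟨r + 1, y, by omega, by omega, by omega, ?_⟩
      subst hy; exact witO_sw n r y 1 1 hn hr hs (by omega)
    · right
      refine ⟨x, s + 1, by omega, by omega, by omega, ?_⟩
      subst hx; exact witO_ne n x s 1 1 hn hr hs (by omega)
  · by_cases h1 : r ≤ 4
    · left
      refine ⟨r + 2, y, by omega, by omega, by omega, ?_⟩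
      subst hy; exact witO_sw n r y 2 1 hn hr hs (by omega)
    · right
      refine ⟨x, s + 2, by omega, by omega, by omega, ?_⟩
      subst hx; exact witO_ne n x s 1 2 hn hr hs (by omega)
  · by_cases h1 : r ≤ 4
    · left
      refine ⟨r + 1, y, by omega, by omega, by omega, ?_⟩
      subst hy; exact witO_sw n r y 1 1 hn hr hs (by omega)
    · right
      refine ⟨x, s + 1, by omega, by omega, by omega, ?_⟩
      subst hx; exact witO_ne n x s 1 1 hn hr hs (by omega)

theorem vol_cast {n : ℕ} {Q : ℕ → ℕ → ℝ} {F : ℕ → ℕ → ℤ}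
    (h : ∀ s, s ≤ n → ∀ r, r ≤ n → Q r s = ((F r s : ℤ) : ℝ))
    (i j k l : ℕ) (hi : i ≤ n) (hj : j ≤ n) (hk : k ≤ n) (hl : l ≤ n) :
    vol Q i j k l = ((volZ F i j k l : ℤ) : ℝ) := by
  unfold vol volZ
  rw [h k hk i hi, h l hl j hj, h l hl i hi, h k hk j hj]
  push_cast; ring

theorem DM_eq {n r s : ℕ} {Q : ℕ → ℕ → ℝ} {F : ℕ → ℕ → ℤ} (d : ℤ) (hr : r ≤ n) (hs : s ≤ n)
    (h : ∀ s, s ≤ n → ∀ r, r ≤ n → Q r s = ((F r s : ℤ) : ℝ)) (hd : d ≤ 0)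
    (h1 : ∀ x y, r < x → x ≤ n → s < y → y ≤ n → d ≤ volZ F r x s y)
    (h2 : ∀ x y, x < r → y < s → d ≤ volZ F x r y s)
    (hw : d = 0 ∨ (∃ x y, r < x ∧ x ≤ n ∧ s < y ∧ y ≤ n ∧ volZ F r x s y ≤ d) ∨
      (∃ x y, x < r ∧ y < s ∧ volZ F x r y s ≤ d)) :
    DM n Q r s = (d : ℝ) := by
  unfold DM Dse Dnw
  apply le_antisymm
  · rcases hw with rfl | ⟨x, y, a1, a2, a3, a4, a5⟩ | ⟨x, y, a1, a2, a3⟩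
    · apply min_le_of_left_le
      rw [Finset.fold_min_le]; left; simp
    · apply min_le_of_left_le
      rw [Finset.fold_min_le]; right
      refine ⟨(x, y), by simp only [mem_product, mem_Icc]; omega, ?_⟩
      rw [vol_cast h _ _ _ _ hr a2 hs a4]; exact_mod_cast a5
    · apply min_le_of_right_le
      rw [Finset.fold_min_le]; right
      refine ⟨(x, y), by simp only [mem_product, mem_range]; omega, ?_⟩
      rw [vol_cast h _ _ _ _ (by omega) hr (by omega) hs]; exact_mod_cast a3
  · refine le_min ?_ ?_
    · rw [Finset.le_fold_min]
      refine ⟨by exact_mod_cast hd, ?_⟩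
      rintro ⟨x, y⟩ hm
      simp only [mem_product, mem_Icc] at hm
      rw [vol_cast h _ _ _ _ hr (by omega) hs (by omega)]
      exact_mod_cast h1 x y (by omega) (by omega) (by omega) (by omega)
    · rw [Finset.le_fold_min]
      refine ⟨by exact_mod_cast hd, ?_⟩
      rintro ⟨x, y⟩ hm
      simp only [mem_product, mem_range] at hm
      rw [vol_cast h _ _ _ _ (by omega) hr (by omega) hs]
      exact_mod_cast h2 x y (by omega) (by omega)

theorem DO_eq {n r s : ℕ} {Q : ℕ → ℕ → ℝ} {F : ℕ → ℕ → ℤ} (d : ℤ) (hr : r ≤ n) (hs : s ≤ n)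
    (h : ∀ s, s ≤ n → ∀ r, r ≤ n → Q r s = ((F r s : ℤ) : ℝ)) (hd : d ≤ 0)
    (h1 : ∀ x y, r < x → x ≤ n → y < s → d ≤ volZ F r x y s)
    (h2 : ∀ x y, x < r → s < y → y ≤ n → d ≤ volZ F x r s y)
    (hw : d = 0 ∨ (∃ x y, r < x ∧ x ≤ n ∧ y < s ∧ volZ F r x y s ≤ d) ∨
      (∃ x y, x < r ∧ s < y ∧ y ≤ n ∧ volZ F x r s y ≤ d)) :
    DO n Q r s = (d : ℝ) := by
  unfold DO Dsw Dne
  apply le_antisymm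
  · rcases hw with rfl | ⟨x, y, a1, a2, a3, a4⟩ | ⟨x, y, a1, a2, a3, a4⟩
    · apply min_le_of_left_le
      rw [Finset.fold_min_le]; left; simp
    · apply min_le_of_left_le
      rw [Finset.fold_min_le]; right
      refine ⟨(x, y), by simp only [mem_product, mem_Icc, mem_range]; omega, ?_⟩
      rw [vol_cast h _ _ _ _ hr a2 (by omega) hs]; exact_mod_cast a4
    · apply min_le_of_right_le
      rw [Finset.fold_min_le]; right
      refine ⟨(x, y), by simp only [mem_product, mem_Icc, mem_range]; omega, ?_⟩
      rw [vol_cast h _ _ _ _ (by omega) hr hs a3]; exact_mod_cast a4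
  · refine le_min ?_ ?_
    · rw [Finset.le_fold_min]
      refine ⟨by exact_mod_cast hd, ?_⟩
      rintro ⟨x, y⟩ hm
      simp only [mem_product, mem_Icc, mem_range] at hm
      rw [vol_cast h _ _ _ _ hr (by omega) (by omega) hs]
      exact_mod_cast h1 x y (by omega) (by omega) (by omega)
    · rw [Finset.le_fold_min]
      refine ⟨by exact_mod_cast hd, ?_⟩
      rintro ⟨x, y⟩ hm
      simp only [mem_product, mem_Icc, mem_range] at hm
      rw [vol_cast h _ _ _ _ (by omega) hr hs (by omega)]
      exact_mod_cast h2 x y (by omega) (by omega) (by omega)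

theorem ineqs (n i j k l : ℕ) (hij : i ≤ j) (hkl : k ≤ l) :
    0 ≤ capF profB n i k + capF profA n j l - capF profA n i l - capF profA n j k ∧
    0 ≤ capF profA n i k + capF profB n j l - capF profA n i l - capF profA n j k ∧
    0 ≤ capF profB n i k + capF profB n j l - capF profB n i l - capF profA n j k ∧
    0 ≤ capF profB n i k + capF profB n j l - capF profA n i l - capF profB n j k := by
  have R : ∀ t, profA t ≤ profA t := fun _ => le_rfl
  have S : ∀ t, profB t ≤ profB t := fun _ => le_rfl
  have T := profA_le_profB
  exact ⟨cap_ineq goodA goodA T R T R one_dim1 i j k l hij hkl,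
    cap_ineq goodA goodA R T R T one_dim2 i j k l hij hkl,
    cap_ineq goodB goodA S S T T one_dim3 i j k l hij hkl,
    cap_ineq goodA goodB T T S S one_dim4 i j k l hij hkl⟩

/-- For every `n ≥ 7`, `A_n` and `B_n` are alternating sign matrices and
`(Q(A_n), Q(B_n))` is a self-dual imprecise copula. -/
theorem AnBn_selfDual (n : ℕ) (hn : 7 ≤ n) :
    IsASM n (Amat n) ∧ IsASM n (Bmat n) ∧
      SelfDual n (Qmat (Amat n)) (Qmat (Bmat n)) := by
  have qa := Qmat_eq_s17 goodA (entryA n hn)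
  have qb := Qmat_eq_s17 goodB (entryB n hn)
  refine ⟨asmA n hn, asmB n hn, ⟨boundary_of goodA (entryA n hn), boundary_of goodB (entryB n hn),
    ?_⟩, ?_, ?_⟩
  · intro i j k l hij hj hkl hl
    rw [qa k (by omega) i (by omega), qa l (by omega) j (by omega), qa l (by omega) i (by omega),
      qa k (by omega) j (by omega), qb k (by omega) i (by omega), qb l (by omega) j (by omega),
      qb l (by omega) i (by omega), qb k (by omega) j (by omega)]
    exact_mod_cast ineqs n i j k l hij hkl
  · intro r hr s hs
    have hle := cap_le_cap (n := n) profA_le_profB r s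
    rw [DM_eq (capF profA n r s - capF profB n r s) hr hs qa (by omega), qa s hs r hr,
      qb s hs r hr]
    · push_cast; ring
    · intro x y hx _ hy _
      have := ineqs n r x s y hx.le hy.le
      unfold volZ; omega
    · intro x y hx hy
      have := ineqs n x r y s hx.le hy.le
      unfold volZ; omega
    · rcases witM n r s hn hr hs with h | h
      · left; omega
      · exact Or.inr h
  · intro r hr s hs
    have hle := cap_le_cap (n := n) profA_le_profB r s
    rw [DO_eq (capF profA n r s - capF profB n r s) hr hs qb (by omega), qa s hs r hr,
      qb s hs r hr]
    · push_cast; ring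
    · intro x y hx _ hy
      have := ineqs n r x y s hx.le hy.le
      unfold volZ; omega
    · intro x y hx hy _
      have := ineqs n x r s y hx.le hy.le
      unfold volZ; omega
    · rcases witO n r s hn hr hs with h | h
      · left; omega
      · exact Or.inr h
end

section
/- For every n ≥ 7, there exist three discrete copulas C₁, C₂, C₃ such that for all (r,s) ∈ L_n × L_n, Q(A_n)(r,s) = min{C₁(r,s), C₂(r,s), C₃(r,s)} and Q(B_n)(r,s) = max{C₁(r,s), C₂(r,s), C₃(r,s)}. Consequently, the imprecise copula (Q(A_n), Q(B_n)) avoids sure loss and is coherent: for every (r,s) ∈ L_n × L_n, Q(A_n)(r,s) is the infimum and Q(B_n)(r,s) the supremum of C(r,s) over all discrete copulas C with Q(A_n) ≤ C ≤ Q(B_n) pointwise. -/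
open Finset

/-- Closed form of `Q(A_n)`. -/
def clA (n r s : ℕ) : ℤ :=
  max 0 ((r : ℤ) + s - n) +
    (if (r + s = n ∨ r + s = n + 1) ∧ 1 ≤ r ∧ 1 ≤ s ∧ r + 1 ≤ n ∧ s + 1 ≤ n then 1 else 0)

/-- The cells in which `Q(A_n)` and `Q(B_n)` differ. -/
def clF (n r s : ℕ) : Prop :=
  (r + s + 1 = n ∧ 1 ≤ r ∧ 1 ≤ s) ∨ (r + s = n ∧ 2 ≤ r ∧ 2 ≤ s) ∨
  (r + s = n + 2 ∧ r + 1 ≤ n ∧ s + 1 ≤ n) ∨ (r + s = n + 3 ∧ r + 1 ≤ n ∧ s + 1 ≤ n)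

/-- The pattern selecting cells where the `k`-th copula equals the upper bound. -/
def clP (n k r s : ℕ) : Prop :=
  (r + s + 1 = n ∧ (s + k) % 3 ≠ 0) ∨ (r + s = n ∧ (s + k) % 3 = 2) ∨
  (r + s = n + 2 ∧ (s + k) % 3 ≠ 0) ∨ (r + s = n + 3 ∧ (s + k) % 3 = 2)

instance (n r s : ℕ) : Decidable (clF n r s) := by unfold clF; infer_instance
instance (n k r s : ℕ) : Decidable (clP n k r s) := by unfold clP; infer_instance

def clB (n r s : ℕ) : ℤ := clA n r s + (if clF n r s then 1 else 0)

def clC (n k r s : ℕ) : ℤ := clA n r s + (if clF n r s ∧ clP n k r s then 1 else 0)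

lemma Qmat_eq_of_mass (n : ℕ) (a : ℕ → ℕ → ℝ) (F : ℕ → ℕ → ℝ)
    (h0 : ∀ s, s ≤ n → F 0 s = 0) (h1 : ∀ r, r ≤ n → F r 0 = 0)
    (hm : ∀ r s, r + 1 ≤ n → s + 1 ≤ n →
      F (r+1) (s+1) - F r (s+1) - F (r+1) s + F r s = a (r+1) (s+1)) :
    ∀ r s, r ≤ n → s ≤ n → Qmat a r s = F r s := by
  have row : ∀ r, r + 1 ≤ n → ∀ s, s ≤ n →
      ∑ j ∈ Icc 1 s, a (r+1) j = F (r+1) s - F r s := by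
    intro r hr s
    induction s with
    | zero => intro _; simp [h1 _ hr, h1 r (by omega)]
    | succ s ih =>
      intro hs
      rw [Finset.sum_Icc_succ_top (by omega), ih (by omega), ← hm r s hr hs]
      ring
  intro r
  induction r with
  | zero => intro s _ hs; simp [Qmat, h0 s hs]
  | succ r ih =>
    intro s hr hs
    have := ih s (by omega) hs
    unfold Qmat at this ⊢
    rw [Finset.sum_Icc_succ_top (by omega), this, row r hr s hs]
    ring

lemma discCopula_of_mass (n : ℕ) (F : ℕ → ℕ → ℝ) (hb : DiscBoundary n F)
    (hm : ∀ r s, r + 1 ≤ n → s + 1 ≤ n →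
      0 ≤ F (r+1) (s+1) - F r (s+1) - F (r+1) s + F r s) : DiscCopula n F := by
  have strip : ∀ r, r + 1 ≤ n → ∀ k l, k ≤ l → l ≤ n →
      F (r+1) k - F r k ≤ F (r+1) l - F r l := by
    intro r hr k l hkl
    induction l, hkl using Nat.le_induction with
    | base => intro _; exact le_rfl
    | succ l hkl ih =>
      intro hl
      have := ih (by omega)
      have := hm r l hr hl
      linarith
  have hvol : ∀ i j k l, i ≤ j → j ≤ n → k ≤ l → l ≤ n →
      0 ≤ F i k + F j l - F i l - F j k := by
    intro i j k l hij
    induction j, hij using Nat.le_induction with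
    | base => intro _ _ _; linarith
    | succ j hij ih =>
      intro hj hkl hl
      have := ih (by omega) hkl hl
      have := strip j hj k l hkl hl
      linarith
  have mono1 : ∀ i i' j, i ≤ i' → i' ≤ n → j ≤ n → F i j ≤ F i' j := by
    intro i i' j h1 h2 h3
    have := hvol i i' 0 j h1 h2 (by omega) h3
    have a1 := (hb i (by omega)).1
    have a2 := (hb i' (by omega)).1
    linarith
  have mono2 : ∀ i j j', j ≤ j' → j' ≤ n → i ≤ n → F i j ≤ F i j' := by
    intro i j j' h1 h2 h3
    have := hvol 0 i j j' (by omega) h3 h1 h2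
    have a1 := (hb j (by omega)).2.1
    have a2 := (hb j' (by omega)).2.1
    linarith
  have lip1 : ∀ i i' j, i ≤ i' → i' ≤ n → j ≤ n → F i' j - F i j ≤ (i' : ℝ) - i := by
    intro i i' j h1 h2 h3
    have := hvol i i' j n h1 h2 h3 le_rfl
    have a1 := (hb i (by omega)).2.2.1
    have a2 := (hb i' (by omega)).2.2.1
    linarith
  have lip2 : ∀ i j j', j ≤ j' → j' ≤ n → i ≤ n → F i j' - F i j ≤ (j' : ℝ) - j := by
    intro i j j' h1 h2 h3
    have := hvol i n j j' h3 le_rfl h1 h2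
    have a1 := (hb j (by omega)).2.2.2
    have a2 := (hb j' (by omega)).2.2.2
    linarith
  have l1 : ∀ i i' j, i ≤ n → i' ≤ n → j ≤ n → |F i j - F i' j| ≤ |(i : ℝ) - i'| := by
    intro i i' j h1 h2 h3
    rcases le_total i i' with h | h
    · have e1 := mono1 i i' j h h2 h3
      have e2 := lip1 i i' j h h2 h3
      rw [abs_sub_comm, abs_sub_comm (i : ℝ), abs_of_nonneg (by linarith)]
      exact e2.trans (le_abs_self _)
    · have e1 := mono1 i' i j h h1 h3
      have e2 := lip1 i' i j h h1 h3
      rw [abs_of_nonneg (by linarith)]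
      exact e2.trans (le_abs_self _)
  have l2 : ∀ i j j', i ≤ n → j ≤ n → j' ≤ n → |F i j - F i j'| ≤ |(j : ℝ) - j'| := by
    intro i j j' h3 h1 h2
    rcases le_total j j' with h | h
    · have e1 := mono2 i j j' h h2 h3
      have e2 := lip2 i j j' h h2 h3
      rw [abs_sub_comm, abs_sub_comm (j : ℝ), abs_of_nonneg (by linarith)]
      exact e2.trans (le_abs_self _)
    · have e1 := mono2 i j' j h h1 h3
      have e2 := lip2 i j' j h h1 h3
      rw [abs_of_nonneg (by linarith)]
      exact e2.trans (le_abs_self _)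
  refine ⟨⟨hb, mono1, mono2, ?_⟩, hvol⟩
  intro i i' j j' h1 h2 h3 h4
  exact (abs_sub_le _ (F i' j) _).trans (add_le_add (l1 i i' j h1 h2 h3) (l2 i' j j' h2 h3 h4))

lemma clA_mass (n r s : ℕ) (hn : 7 ≤ n) (hr : r + 1 ≤ n) (hs : s + 1 ≤ n) :
    ((clA n (r+1) (s+1) - clA n r (s+1) - clA n (r+1) s + clA n r s : ℤ) : ℝ)
      = Amat n (r+1) (s+1) := by
  have : clA n (r+1) (s+1) - clA n r (s+1) - clA n (r+1) s + clA n r s =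
    if (r+1) + (s+1) = n ∧ 1 ≤ s+1 ∧ s+1 ≤ n - 1 then 1
    else if (r+1) + (s+1) = n + 2 ∧ 3 ≤ s+1 ∧ s+1 ≤ n - 1 then -1
    else if (r+1) + (s+1) = n + 3 ∧ 3 ≤ s+1 ∧ s+1 ≤ n then 1
    else 0 := by
    unfold clA
    grind (splits := 40)
  rw [this]
  unfold Amat
  push_cast
  rfl

lemma clB_mass (n r s : ℕ) (hn : 7 ≤ n) (hr : r + 1 ≤ n) (hs : s + 1 ≤ n) :
    ((clB n (r+1) (s+1) - clB n r (s+1) - clB n (r+1) s + clB n r s : ℤ) : ℝ)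
      = Bmat n (r+1) (s+1) := by
  have : clB n (r+1) (s+1) - clB n r (s+1) - clB n (r+1) s + clB n r s =
    if (r+1) + (s+1) = n - 1 ∧ 1 ≤ s+1 ∧ s+1 ≤ n - 2 then 1
    else if (r+1) + (s+1) = n + 1 ∧ 3 ≤ s+1 ∧ s+1 ≤ n - 2 then -1
    else if (r+1) + (s+1) = n + 2 ∧ 3 ≤ s+1 ∧ s+1 ≤ n - 1 then 1
    else if (r+1) + (s+1) = n + 4 ∧ 5 ≤ s+1 ∧ s+1 ≤ n - 1 then -1
    else if (r+1) + (s+1) = n + 5 ∧ 5 ≤ s+1 ∧ s+1 ≤ n then 1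
    else 0 := by
    unfold clB clA clF
    have hd : r + s + 4 ≤ n ∨ r + s + 3 = n ∨ r + s + 2 = n ∨ r + s + 1 = n ∨ r + s = n ∨
      r + s = n + 1 ∨ r + s = n + 2 ∨ r + s = n + 3 ∨ n + 4 ≤ r + s := by omega
    rcases hd with h | h | h | h | h | h | h | h | h <;> grind (splits := 40)
  rw [this]
  unfold Bmat
  push_cast
  rfl

lemma clC_mass (n k r s : ℕ) (hn : 7 ≤ n) (hr : r + 1 ≤ n) (hs : s + 1 ≤ n) :
    0 ≤ clC n k (r+1) (s+1) - clC n k r (s+1) - clC n k (r+1) s + clC n k r s := by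
  unfold clC clA clF clP
  have hd : r + s + 4 ≤ n ∨ r + s + 3 = n ∨ r + s + 2 = n ∨ r + s + 1 = n ∨ r + s = n ∨
      r + s = n + 1 ∨ r + s = n + 2 ∨ r + s = n + 3 ∨ n + 4 ≤ r + s := by omega
  have hk : ((s + k) % 3 = 0 ∧ (s + 1 + k) % 3 = 1) ∨ ((s + k) % 3 = 1 ∧ (s + 1 + k) % 3 = 2) ∨
    ((s + k) % 3 = 2 ∧ (s + 1 + k) % 3 = 0) := by omega
  rcases hd with h | h | h | h | h | h | h | h | h <;>
  rcases hk with ⟨h1, h2⟩ | ⟨h1, h2⟩ | ⟨h1, h2⟩ <;> simp only [h1, h2] <;> grind (splits := 40)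

lemma clC_bd (n k : ℕ) (hn : 7 ≤ n) (i : ℕ) (hi : i ≤ n) :
    clC n k i 0 = 0 ∧ clC n k 0 i = 0 ∧ clC n k i n = i ∧ clC n k n i = i := by
  unfold clC clA clF
  refine ⟨?_, ?_, ?_, ?_⟩ <;> grind (splits := 40)

lemma clC_minmax (n r s : ℕ) :
    clA n r s = min (clC n 0 r s) (min (clC n 1 r s) (clC n 2 r s)) ∧
    clB n r s = max (clC n 0 r s) (max (clC n 1 r s) (clC n 2 r s)) := by
  unfold clC clB
  by_cases hF : clF n r s
  · simp only [hF, true_and]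
    unfold clF at hF
    unfold clP
    have hk : (s % 3 = 0 ∧ (s + 1) % 3 = 1 ∧ (s + 2) % 3 = 2) ∨
      (s % 3 = 1 ∧ (s + 1) % 3 = 2 ∧ (s + 2) % 3 = 0) ∨
      (s % 3 = 2 ∧ (s + 1) % 3 = 0 ∧ (s + 2) % 3 = 1) := by omega
    rcases hk with ⟨h1, h2, h3⟩ | ⟨h1, h2, h3⟩ | ⟨h1, h2, h3⟩ <;>
      simp only [add_zero, h1, h2, h3] <;> constructor <;> grind (splits := 40)
  · simp [hF]

lemma clC_copula (n k : ℕ) (hn : 7 ≤ n) : DiscCopula n (fun r s => (clC n k r s : ℝ)) := by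
  apply discCopula_of_mass
  · intro i hi
    obtain ⟨h1, h2, h3, h4⟩ := clC_bd n k hn i hi
    simp only [h1, h2, h3, h4]
    simp
  · intro r s hr hs
    exact_mod_cast clC_mass n k r s hn hr hs

lemma QA_eq (n : ℕ) (hn : 7 ≤ n) : ∀ r s, r ≤ n → s ≤ n → Qmat (Amat n) r s = (clA n r s : ℝ) := by
  apply Qmat_eq_of_mass n (Amat n) (fun r s => (clA n r s : ℝ))
  · intro s hs
    have : clA n 0 s = 0 := by unfold clA; grind (splits := 40)
    simp [this]
  · intro r hr
    have : clA n r 0 = 0 := by unfold clA; grind (splits := 40)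
    simp [this]
  · intro r s hr hs
    rw [← clA_mass n r s hn hr hs]
    push_cast
    rfl

lemma QB_eq (n : ℕ) (hn : 7 ≤ n) : ∀ r s, r ≤ n → s ≤ n → Qmat (Bmat n) r s = (clB n r s : ℝ) := by
  apply Qmat_eq_of_mass n (Bmat n) (fun r s => (clB n r s : ℝ))
  · intro s hs
    have : clB n 0 s = 0 := by unfold clB clA clF; grind (splits := 40)
    simp [this]
  · intro r hr
    have : clB n r 0 = 0 := by unfold clB clA clF; grind (splits := 40)
    simp [this]
  · intro r s hr hs
    rw [← clB_mass n r s hn hr hs]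
    push_cast
    rfl

/-- For every `n ≥ 7`, there exist three discrete copulas `C₁, C₂, C₃`
whose pointwise min is `Q(A_n)` and pointwise max is `Q(B_n)`; consequently the
imprecise copula `(Q(A_n), Q(B_n))` avoids sure loss and is coherent. -/
theorem AnBn_coherent (n : ℕ) (hn : 7 ≤ n) :
    (∃ C₁ C₂ C₃ : ℕ → ℕ → ℝ,
      DiscCopula n C₁ ∧ DiscCopula n C₂ ∧ DiscCopula n C₃ ∧
      (∀ r s, r ≤ n → s ≤ n →
        Qmat (Amat n) r s = min (C₁ r s) (min (C₂ r s) (C₃ r s)) ∧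
        Qmat (Bmat n) r s = max (C₁ r s) (max (C₂ r s) (C₃ r s)))) ∧
    (∃ C : ℕ → ℕ → ℝ, DiscCopula n C ∧
      ∀ r s, r ≤ n → s ≤ n →
        Qmat (Amat n) r s ≤ C r s ∧ C r s ≤ Qmat (Bmat n) r s) ∧
    (∀ r s, r ≤ n → s ≤ n →
      IsGLB {x : ℝ | ∃ C : ℕ → ℕ → ℝ, DiscCopula n C ∧
          (∀ r' s', r' ≤ n → s' ≤ n →
            Qmat (Amat n) r' s' ≤ C r' s' ∧ C r' s' ≤ Qmat (Bmat n) r' s') ∧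
          x = C r s}
        (Qmat (Amat n) r s) ∧
      IsLUB {x : ℝ | ∃ C : ℕ → ℕ → ℝ, DiscCopula n C ∧
          (∀ r' s', r' ≤ n → s' ≤ n →
            Qmat (Amat n) r' s' ≤ C r' s' ∧ C r' s' ≤ Qmat (Bmat n) r' s') ∧
          x = C r s}
        (Qmat (Bmat n) r s)) := by
  have key : ∀ r s, r ≤ n → s ≤ n →
      Qmat (Amat n) r s = min (clC n 0 r s : ℝ) (min (clC n 1 r s : ℝ) (clC n 2 r s : ℝ)) ∧
      Qmat (Bmat n) r s = max (clC n 0 r s : ℝ) (max (clC n 1 r s : ℝ) (clC n 2 r s : ℝ)) := by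
    intro r s hr hs
    rw [QA_eq n hn r s hr hs, QB_eq n hn r s hr hs]
    exact_mod_cast clC_minmax n r s
  have b0 : ∀ r s, r ≤ n → s ≤ n →
      Qmat (Amat n) r s ≤ (clC n 0 r s : ℝ) ∧ (clC n 0 r s : ℝ) ≤ Qmat (Bmat n) r s := by
    intro r s hr hs
    obtain ⟨h1, h2⟩ := key r s hr hs
    rw [h1, h2]; simp
  have b1 : ∀ r s, r ≤ n → s ≤ n →
      Qmat (Amat n) r s ≤ (clC n 1 r s : ℝ) ∧ (clC n 1 r s : ℝ) ≤ Qmat (Bmat n) r s := by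
    intro r s hr hs
    obtain ⟨h1, h2⟩ := key r s hr hs
    rw [h1, h2]; simp
  have b2 : ∀ r s, r ≤ n → s ≤ n →
      Qmat (Amat n) r s ≤ (clC n 2 r s : ℝ) ∧ (clC n 2 r s : ℝ) ≤ Qmat (Bmat n) r s := by
    intro r s hr hs
    obtain ⟨h1, h2⟩ := key r s hr hs
    rw [h1, h2]; simp
  have c0 := clC_copula n 0 hn
  have c1 := clC_copula n 1 hn
  have c2 := clC_copula n 2 hn
  refine ⟨⟨_, _, _, c0, c1, c2, key⟩, ⟨_, c0, b0⟩, ?_⟩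
  intro r s hr hs
  obtain ⟨hA, hB⟩ := key r s hr hs
  constructor
  · apply IsLeast.isGLB
    refine ⟨?_, ?_⟩
    · rcases min_choice (clC n 0 r s : ℝ) (min (clC n 1 r s : ℝ) (clC n 2 r s : ℝ)) with h | h
      · exact ⟨_, c0, b0, hA.trans h⟩
      · rcases min_choice (clC n 1 r s : ℝ) (clC n 2 r s : ℝ) with h' | h'
        · exact ⟨_, c1, b1, hA.trans (h.trans h')⟩
        · exact ⟨_, c2, b2, hA.trans (h.trans h')⟩
    · rintro x ⟨C, _, hC, rfl⟩
      exact (hC r s hr hs).1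
  · apply IsGreatest.isLUB
    refine ⟨?_, ?_⟩
    · rcases max_choice (clC n 0 r s : ℝ) (max (clC n 1 r s : ℝ) (clC n 2 r s : ℝ)) with h | h
      · exact ⟨_, c0, b0, hB.trans h⟩
      · rcases max_choice (clC n 1 r s : ℝ) (clC n 2 r s : ℝ) with h' | h'
        · exact ⟨_, c1, b1, hB.trans (h.trans h')⟩
        · exact ⟨_, c2, b2, hB.trans (h.trans h')⟩
    · rintro x ⟨C, _, hC, rfl⟩
      exact (hC r s hr hs).2
end
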